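/- arXiv:2209.03553 — 3 statements merged into one kernel-verified Lean document; each statement's English description precedes it below -/
import Mathlib

section
/- Let (V, 𝒮) be a simplicial fan supported on ℝⁿ_{≥0}, let E ∈ 𝒮, and let F ∈ lk(E) be a face with a full partition F = F₁ ⊔ F₂ ⊔ 𝒜_F. Let G ∈ lk(E ∪ F), and consider F′ := F ∪ G ∈ lk(E). Set 𝒜̂ := {A ∈ 𝒜_F : V_A ⊆ σ(G)}, F₁′ := F₁ ∪ 𝒜̂, and F₂′ := F₂ ∪ G. Then the set of apices of F′ (as a face of lk(E)) is 𝒜_{F′} = 𝒜_F ∖ 𝒜̂, and F′ = F₁′ ⊔ F₂′ ⊔ 𝒜_{F′} is a full partition of F′. -/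
open scoped Classical

noncomputable section

/-- The conical hull (set of nonnegative linear combinations) of a finite set of
vectors in `ℝⁿ`. -/
def coneOf {n : ℕ} (F : Finset (Fin n → ℝ)) : Set (Fin n → ℝ) :=
  {x | ∃ lam : (Fin n → ℝ) → ℝ, (∀ v ∈ F, 0 ≤ lam v) ∧ x = ∑ v ∈ F, lam v • v}

/-- A simplicial fan supported on `ℝⁿ_{≥0}`, encoding a geometric triangulation of
the `(n-1)`-dimensional simplex: a finite vertex set `V ⊆ ℝⁿ_{≥0} ∖ {0}` together
with a downward-closed collection of linearly independent finite subsets of `V`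
(the faces, including `∅`) whose cones cover the nonnegative orthant and intersect
along common faces. -/
structure SimplicialFan (n : ℕ) where
  verts : Finset (Fin n → ℝ)
  faces : Finset (Finset (Fin n → ℝ))
  verts_nonneg : ∀ v ∈ verts, ∀ i, 0 ≤ v i
  verts_ne_zero : ∀ v ∈ verts, v ≠ 0
  faces_subset_verts : ∀ F ∈ faces, F ⊆ verts
  empty_mem : ∅ ∈ faces
  indep : ∀ F ∈ faces, LinearIndependent ℝ (fun v : {x // x ∈ F} => (v : Fin n → ℝ))
  down_closed : ∀ F ∈ faces, ∀ F' ⊆ F, F' ∈ faces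
  covers : (⋃ F ∈ faces, coneOf F) = {x : Fin n → ℝ | ∀ i, 0 ≤ x i}
  inter_cone : ∀ F ∈ faces, ∀ F' ∈ faces, coneOf F ∩ coneOf F' = coneOf (F ∩ F')

/-- `σ(F)`: the set of coordinates `ℓ` such that some `v ∈ F` has `v_ℓ ≠ 0`. -/
def suppSet {n : ℕ} (F : Finset (Fin n → ℝ)) : Finset (Fin n) :=
  Finset.univ.filter fun ℓ => ∃ v ∈ F, v ℓ ≠ 0

/-- A face is interior if its support is all of `{1,…,n}`. -/
def IsInteriorFace {n : ℕ} (F : Finset (Fin n → ℝ)) : Prop :=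
  suppSet F = Finset.univ

/-- The excess `e(F) = |σ(F)| − |F|`. -/
def excess {n : ℕ} (F : Finset (Fin n → ℝ)) : ℕ :=
  (suppSet F).card - F.card

/-- The link of a face `E`: faces `F` with `F ∩ E = ∅` and `F ∪ E ∈ 𝒮`. -/
def link {n : ℕ} (S : SimplicialFan n) (E : Finset (Fin n → ℝ)) :
    Finset (Finset (Fin n → ℝ)) :=
  S.faces.filter fun F => F ∩ E = ∅ ∧ F ∪ E ∈ S.faces

/-- `F ∈ lk(E)` is a pyramid with apex `A ∈ F` if `F ∪ E` is interior but
`(F ∪ E) ∖ {A}` is not. -/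
def IsPyramidApex {n : ℕ} (E F : Finset (Fin n → ℝ)) (A : Fin n → ℝ) : Prop :=
  A ∈ F ∧ IsInteriorFace (F ∪ E) ∧ ¬ IsInteriorFace ((F ∪ E).erase A)

/-- `𝒜_F`: the set of apices of `F` (relative to `E`). -/
def apices {n : ℕ} (E F : Finset (Fin n → ℝ)) : Finset (Fin n → ℝ) :=
  F.filter fun A => IsPyramidApex E F A

/-- `V_A = {1,…,n} ∖ σ((F ∪ E) ∖ {A})`. -/
def baseDirs {n : ℕ} (E F : Finset (Fin n → ℝ)) (A : Fin n → ℝ) : Finset (Fin n) :=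
  Finset.univ \ suppSet ((F ∪ E).erase A)

/-- `F` is a U-pyramid if `|V_A| = 1` for some apex `A` of `F`. -/
def IsUPyramid {n : ℕ} (E F : Finset (Fin n → ℝ)) : Prop :=
  ∃ A ∈ apices E F, (baseDirs E F A).card = 1

/-- A full partition of `F ∈ lk(E)`: a decomposition `F = F₁ ⊔ F₂ ⊔ 𝒜_F` with
`F₁ ∪ 𝒜_F ∪ E` interior and `σ(F₂ ∪ E) = {1,…,n} ∖ ⋃_{A ∈ 𝒜_F} V_A`. -/
def IsFullPartition {n : ℕ} (E F F₁ F₂ : Finset (Fin n → ℝ)) : Prop :=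
  F = F₁ ∪ F₂ ∪ apices E F ∧
  Disjoint F₁ F₂ ∧ Disjoint F₁ (apices E F) ∧ Disjoint F₂ (apices E F) ∧
  IsInteriorFace (F₁ ∪ apices E F ∪ E) ∧
  suppSet (F₂ ∪ E) = Finset.univ \ (apices E F).biUnion (baseDirs E F)

/-- The local `h`-polynomial
`ℓ(𝒮, E; t) = Σ_{F ∈ 𝒮, E ⊆ F} (−1)^{n−|F|} t^{(n−|E|)−e(F)} (t−1)^{e(F)}`. -/
def localH {n : ℕ} (S : SimplicialFan n) (E : Finset (Fin n → ℝ)) : Polynomial ℤ :=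
  ∑ F ∈ S.faces.filter (fun F => E ⊆ F),
    Polynomial.C ((-1 : ℤ) ^ (n - F.card)) *
      Polynomial.X ^ ((n - E.card) - excess F) * (Polynomial.X - 1) ^ (excess F)

theorem suppSet_union {n : ℕ} (F G : Finset (Fin n → ℝ)) :
    suppSet (F ∪ G) = suppSet F ∪ suppSet G := by
  ext ℓ
  simp only [suppSet, Finset.mem_filter, Finset.mem_univ, true_and, Finset.mem_union,
    or_and_right, exists_or]

theorem suppSet_mono {n : ℕ} {F G : Finset (Fin n → ℝ)} (h : F ⊆ G) :
    suppSet F ⊆ suppSet G := by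
  rw [← Finset.union_eq_right.mpr h, suppSet_union]
  exact Finset.subset_union_left

theorem IsInteriorFace.mono {n : ℕ} {F G : Finset (Fin n → ℝ)} (hF : IsInteriorFace F)
    (h : F ⊆ G) : IsInteriorFace G :=
  Finset.univ_subset_iff.mp (hF.symm.subset.trans (suppSet_mono h))

theorem isInteriorFace_erase_iff {n : ℕ} (E F : Finset (Fin n → ℝ)) (A : Fin n → ℝ) :
    IsInteriorFace ((F ∪ E).erase A) ↔ baseDirs E F A = ∅ := by
  rw [IsInteriorFace, baseDirs, Finset.sdiff_eq_empty_iff_subset, Finset.univ_subset_iff]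

theorem mem_apices {n : ℕ} {E F : Finset (Fin n → ℝ)} (h : IsInteriorFace (F ∪ E))
    (A : Fin n → ℝ) : A ∈ apices E F ↔ A ∈ F ∧ baseDirs E F A ≠ ∅ := by
  simp only [apices, Finset.mem_filter, IsPyramidApex, isInteriorFace_erase_iff, h, true_and,
    and_self_left, ne_eq]

theorem baseDirs_union {n : ℕ} {E F G : Finset (Fin n → ℝ)} {A : Fin n → ℝ} (hA : A ∉ G) :
    baseDirs E (F ∪ G) A = baseDirs E F A \ suppSet G := by
  rw [baseDirs, baseDirs, Finset.union_right_comm, Finset.erase_union_distrib,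
    Finset.erase_eq_of_notMem hA, suppSet_union, sdiff_sdiff_left, Finset.sup_eq_union]

theorem apices_union {n : ℕ} {E F G : Finset (Fin n → ℝ)} (h : IsInteriorFace (F ∪ E))
    (hG : Disjoint G (E ∪ F)) :
    apices E (F ∪ G) =
      apices E F \ ((apices E F).filter fun A => baseDirs E F A ⊆ suppSet G) := by
  have h' : IsInteriorFace (F ∪ G ∪ E) := h.mono (by grind)
  ext A
  rw [Finset.mem_sdiff, Finset.mem_filter, mem_apices h', mem_apices h]
  by_cases hAG : A ∈ G
  · have hA : A ∉ E ∪ F := Finset.disjoint_left.mp hG hAG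
    have hb : baseDirs E (F ∪ G) A = ∅ :=
      (isInteriorFace_erase_iff _ _ _).mp (h.mono (by grind))
    grind
  · rw [baseDirs_union hAG, ne_eq, Finset.sdiff_eq_empty_iff_subset]
    grind

/-- Full partitions are inherited: if `F ∈ lk(E)` has a full partition
`F = F₁ ⊔ F₂ ⊔ 𝒜_F` and `G ∈ lk(E ∪ F)`, then for `F′ := F ∪ G` the apex set is
`𝒜_{F′} = 𝒜_F ∖ 𝒜̂`, where `𝒜̂ = {A ∈ 𝒜_F : V_A ⊆ σ(G)}`, and
`F′ = (F₁ ∪ 𝒜̂) ⊔ (F₂ ∪ G) ⊔ 𝒜_{F′}` is a full partition of `F′`. -/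
theorem fullPartition_inherit {n : ℕ} (S : SimplicialFan n)
    (E : Finset (Fin n → ℝ)) (hE : E ∈ S.faces)
    (F : Finset (Fin n → ℝ)) (hF : F ∈ link S E)
    (F₁ F₂ : Finset (Fin n → ℝ)) (hfull : IsFullPartition E F F₁ F₂)
    (G : Finset (Fin n → ℝ)) (hG : G ∈ link S (E ∪ F)) :
    apices E (F ∪ G) =
      apices E F \ ((apices E F).filter fun A => baseDirs E F A ⊆ suppSet G) ∧
    IsFullPartition E (F ∪ G)
      (F₁ ∪ (apices E F).filter fun A => baseDirs E F A ⊆ suppSet G)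
      (F₂ ∪ G) := by
  obtain ⟨hFeq, h12, h1A, h2A, hint, hsupp⟩ := hfull
  have hGd : Disjoint G (E ∪ F) := Finset.disjoint_iff_inter_eq_empty.mpr
    (Finset.mem_filter.mp hG).2.1
  have hI : IsInteriorFace (F ∪ E) := hint.mono (by grind)
  have hap := apices_union hI hGd
  have hGF : Disjoint F G := (hGd.mono_right Finset.subset_union_right).symm
  have hAF : apices E F ⊆ F := Finset.filter_subset _ _
  have h1F : F₁ ⊆ F := by grind
  have hbase : ∀ A ∈ apices E F, baseDirs E (F ∪ G) A = baseDirs E F A \ suppSet G :=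
    fun A hA => baseDirs_union (Finset.disjoint_left.mp hGF (hAF hA))
  refine ⟨hap, ?_, ?_, ?_, ?_, hint.mono ?_, ?_⟩
  · rw [hap]
    grind
  · rw [Finset.disjoint_left] at *
    grind
  · rw [hap]
    rw [Finset.disjoint_left] at *
    grind
  · rw [hap]
    rw [Finset.disjoint_left] at *
    grind
  · rw [hap]
    grind
  · rw [Finset.union_right_comm, suppSet_union, hsupp, hap]
    ext ℓ
    simp only [Finset.mem_union, Finset.mem_sdiff, Finset.mem_univ, true_and, Finset.mem_biUnion,
      Finset.mem_filter]
    grind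

end
end

section
/- Let u₁,…,u_s ∈ ℝ^s be linearly independent vectors generating a cone C := {Σ λ_j u_j : λ_j ≥ 0}, and assume C is positive. Then there exists a unique permutation w of {1,…,s} such that the reordered tuple (u_{w(1)},…,u_{w(s)}) is positively ordered. -/
noncomputable section

/-- Projection of `ℝ^s` onto the first `k` coordinates. -/
def prProj {s : ℕ} (k : ℕ) (hk : k ≤ s) (x : Fin s → ℝ) : Fin k → ℝ :=
  fun j => x (Fin.castLE hk j)

/-- The vector `(0,…,0,1) ∈ ℝ^k`. -/
def lastUnit (k : ℕ) : Fin k → ℝ :=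
  fun j => if (j : ℕ) + 1 = k then 1 else 0

/-- A convex cone `C ⊆ ℝ^s` is positive if `(0,…,0,1) ∈ pr_k(C)` for every
`1 ≤ k ≤ s`. -/
def IsPositiveCone {s : ℕ} (C : Set (Fin s → ℝ)) : Prop :=
  ∀ k, 1 ≤ k → ∀ hk : k ≤ s, lastUnit k ∈ prProj k hk '' C

/-- A tuple `(v₁,…,v_m)` of vectors in `ℝ^m` is positively ordered if for every
`1 ≤ k ≤ m` the cone in `ℝ^k` generated by `pr_k(v₁),…,pr_k(v_k)` is positive. -/
def PositivelyOrdered {m : ℕ} (v : Fin m → (Fin m → ℝ)) : Prop :=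
  ∀ k, 1 ≤ k → ∀ hk : k ≤ m,
    IsPositiveCone {x : Fin k → ℝ | ∃ lam : Fin m → ℝ, (∀ i, 0 ≤ lam i) ∧
      (∀ i : Fin m, ¬ ((i : ℕ) < k) → lam i = 0) ∧
      x = ∑ i, lam i • prProj k hk (v i)}

/-- The first `k + 1` coordinates of `x` are `(0,…,0,1)`. -/
def UnitUpTo {n : ℕ} (k : Fin n) (x : Fin n → ℝ) : Prop :=
  x k = 1 ∧ ∀ j < k, x j = 0

/-- Coordinatewise form of positivity of the cone generated by a finite family. -/
def PositiveFamily {ι : Type} [Fintype ι] {n : ℕ} (u : ι → Fin n → ℝ) : Prop :=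
  ∀ k, ∃ c : ι → ℝ, (∀ i, 0 ≤ c i) ∧ UnitUpTo k (∑ i, c i • u i)

/-- Coordinatewise form of `PositivelyOrdered`. -/
def OrderedFamily {n : ℕ} (v : Fin n → Fin n → ℝ) : Prop :=
  ∀ k, ∃ c : Fin n → ℝ, (∀ i, 0 ≤ c i) ∧ (∀ i, k < i → c i = 0) ∧
    UnitUpTo k (∑ i, c i • v i)

theorem prProj_eq_lastUnit_iff {n : ℕ} (k : Fin n) (h : (k : ℕ) + 1 ≤ n) (x : Fin n → ℝ) :
    prProj ((k : ℕ) + 1) h x = lastUnit ((k : ℕ) + 1) ↔ UnitUpTo k x := by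
  constructor
  · intro hx
    refine ⟨by simpa [prProj, lastUnit, Fin.castLE] using congrFun hx ⟨k, by omega⟩,
      fun j hj => ?_⟩
    have hj' : (j : ℕ) < k := hj
    simpa [prProj, lastUnit, Fin.castLE, hj'.ne] using congrFun hx ⟨j, by omega⟩
  · rintro ⟨h1, h0⟩
    funext ⟨j, hj⟩
    by_cases hjk : j = k
    · subst hjk; simpa [prProj, lastUnit, Fin.castLE] using h1
    · simpa [prProj, lastUnit, Fin.castLE, hjk] using
        h0 ⟨j, by omega⟩ (Fin.lt_def.2 (by simp; omega))

theorem IsPositiveCone.positiveFamily {s : ℕ} {u : Fin s → Fin s → ℝ}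
    (h : IsPositiveCone {x | ∃ c : Fin s → ℝ, (∀ i, 0 ≤ c i) ∧ x = ∑ i, c i • u i}) :
    PositiveFamily u := by
  intro k
  obtain ⟨x, ⟨c, hc, rfl⟩, hx⟩ := h (k + 1) (by omega) (by omega)
  exact ⟨c, hc, (prProj_eq_lastUnit_iff k _ _).1 hx⟩

theorem prProj_sum_smul {ι : Type} [Fintype ι] {n : ℕ} (k : ℕ) (hk : k ≤ n) (c : ι → ℝ)
    (v : ι → Fin n → ℝ) : prProj k hk (∑ i, c i • v i) = ∑ i, c i • prProj k hk (v i) := by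
  funext j
  simp [prProj, Finset.sum_apply]

theorem positivelyOrdered_iff_orderedFamily {n : ℕ} (v : Fin n → Fin n → ℝ) :
    PositivelyOrdered v ↔ OrderedFamily v := by
  constructor
  · intro h k
    obtain ⟨x, ⟨c, hc, hck, rfl⟩, hx⟩ := h (k + 1) (by omega) (by omega) (k + 1) (by omega) le_rfl
    refine ⟨c, hc, fun i hi => hck i (by have : (k : ℕ) < i := hi; omega), ?_⟩
    rw [← prProj_eq_lastUnit_iff k (by omega), prProj_sum_smul]
    exact hx
  · intro h k _ hk l hl hlk
    obtain ⟨l, rfl⟩ := Nat.exists_eq_add_of_le' hl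
    obtain ⟨c, hc, hcl, hx⟩ := h ⟨l, by omega⟩
    refine ⟨_, ⟨c, hc, fun i hi => hcl i (Fin.lt_def.2 (by simp; omega)), rfl⟩, ?_⟩
    rw [← prProj_sum_smul, ← (prProj_eq_lastUnit_iff ⟨l, by omega⟩ (by simp; omega) _).2 hx]
    rfl

theorem UnitUpTo.map_eq {n : ℕ} {k : Fin n} {x : Fin n → ℝ} (hx : UnitUpTo k x)
    (g : (Fin n → ℝ) →ₗ[ℝ] ℝ) (hg : ∀ l, k < l → g (Pi.single l 1) = 0) :
    g x = g (Pi.single k 1) := by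
  rw [LinearMap.pi_apply_eq_sum_univ g x, Finset.sum_eq_single k]
  · rw [hx.1, one_smul]
    congr 1
    funext j
    simp [Pi.single_apply, eq_comm]
  · intro l _ hl
    rcases lt_or_gt_of_ne hl with h | h
    · simp [hx.2 l h]
    · have : (fun j => if l = j then (1 : ℝ) else 0) = Pi.single l 1 := by
        funext j
        simp [Pi.single_apply, eq_comm]
      rw [this, hg l h, smul_zero]
  · simp

theorem linearMap_eq_zero_of_unitUpTo {n : ℕ} (g : (Fin n → ℝ) →ₗ[ℝ] ℝ)
    (h : ∀ k, (∃ x, UnitUpTo k x ∧ g x ≤ 0) ∧ ∃ x, UnitUpTo k x ∧ 0 ≤ g x) : g = 0 := by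
  have key : ∀ d : ℕ, ∀ k : Fin n, n ≤ k + d → g (Pi.single k 1) = 0 := by
    intro d
    induction d with
    | zero => intro k hk; omega
    | succ d ih =>
      intro k hk
      have hg : ∀ l, k < l → g (Pi.single l 1) = 0 := fun l hl =>
        ih l (by have : (k : ℕ) < l := hl; omega)
      obtain ⟨⟨x, hx, hx0⟩, y, hy, hy0⟩ := h k
      rw [hx.map_eq g hg] at hx0
      rw [hy.map_eq g hg] at hy0
      exact le_antisymm hx0 hy0
  refine LinearMap.pi_ext' fun k => LinearMap.ext_ring ?_
  simpa using key n k (by omega)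

theorem PositiveFamily.linearIndependent {ι : Type} [Fintype ι] {n : ℕ} {u : ι → Fin n → ℝ}
    (h : PositiveFamily u) (hcard : Fintype.card ι = n) : LinearIndependent ℝ u := by
  refine linearIndependent_of_top_le_span_of_card_eq_finrank ?_ (by simpa using hcard)
  by_contra hlt
  obtain ⟨g, hg, hle⟩ := Submodule.exists_le_ker_of_lt_top _ (lt_top_iff_ne_top.2
    (fun h' => hlt h'.ge))
  refine hg (linearMap_eq_zero_of_unitUpTo g fun k => ?_)
  obtain ⟨c, -, hx⟩ := h k
  have h0 : g (∑ i, c i • u i) = 0 := hle (Submodule.sum_mem _ fun i _ =>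
    Submodule.smul_mem _ _ (Submodule.subset_span ⟨i, rfl⟩))
  exact ⟨⟨_, hx, h0.le⟩, _, hx, h0.ge⟩

theorem OrderedFamily.linearIndependent {n : ℕ} {v : Fin n → Fin n → ℝ}
    (h : OrderedFamily v) : LinearIndependent ℝ v :=
  PositiveFamily.linearIndependent (fun k => let ⟨c, hc, _, hx⟩ := h k; ⟨c, hc, hx⟩) (by simp)

/-- The last nonzero entry of `f`, if any, is positive. -/
def ColexNonneg {n : ℕ} (f : Fin n → ℝ) : Prop :=
  ∀ k, (∀ l, k < l → f l = 0) → 0 ≤ f k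

theorem exists_mem_forall_colexNonneg_sub {ι : Type} {n : ℕ} (S : Finset ι) (hS : S.Nonempty)
    (f : ι → Fin n → ℝ) : ∃ i ∈ S, ∀ j ∈ S, ColexNonneg (f j - f i) := by
  obtain ⟨i, hi, hmin⟩ := S.exists_min_image (fun j => toColex (f j)) hS
  refine ⟨i, hi, fun j hj k hk => ?_⟩
  by_contra hneg
  refine absurd (hmin j hj) (not_le.2 ⟨k, fun l hl => sub_eq_zero.1 (hk l hl), ?_⟩)
  simpa using hneg

theorem exists_combination_nonneg {ι : Type} [Finite ι] {n : ℕ} (N : ι → Fin n → ℝ)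
    (hN : ∀ j, ColexNonneg (N j)) (k : Fin n) :
    ∃ a : Fin n → ℝ, UnitUpTo k a ∧ ∀ j, 0 ≤ ∑ l, a l * N j l := by
  have key : ∀ d : ℕ, ∀ m : ℕ, m + d = n → ∃ a : Fin n → ℝ,
      (∀ l : Fin n, (l : ℕ) < m → a l = 0) ∧ (∀ l : Fin n, (l : ℕ) = m → a l = 1) ∧
      ∀ j, 0 ≤ ∑ l, a l * N j l ∧ (∑ l, a l * N j l = 0 → ∀ l : Fin n, m ≤ l → N j l = 0) := by
    intro d
    induction d with
    | zero => exact fun m hm => ⟨0, by simp, fun l hl => by omega, fun j => ⟨by simp,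
        fun _ l hl => by omega⟩⟩
    | succ d ih =>
      intro m hm
      obtain ⟨b, hb0, -, hb⟩ := ih (m + 1) (by omega)
      let k : Fin n := ⟨m, by omega⟩
      have ht : ∀ᶠ t : ℝ in Filter.atTop, ∀ j, 0 < ∑ l, b l * N j l →
          0 < N j k + t * ∑ l, b l * N j l := by
        refine Filter.eventually_all.2 fun j => ?_
        by_cases hj : 0 < ∑ l, b l * N j l
        · filter_upwards [(Filter.tendsto_atTop_add_const_left _ (N j k)
            (Filter.tendsto_id.atTop_mul_const hj)).eventually_gt_atTop 0] with t ht _ using ht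
        · exact Filter.Eventually.of_forall fun t h => absurd h hj
      obtain ⟨t, ht⟩ := ht.exists
      have hsum : ∀ j, ∑ l, (Pi.single k 1 + t • b : Fin n → ℝ) l * N j l
          = N j k + t * ∑ l, b l * N j l := fun j => by
        simp [add_mul, Finset.sum_add_distrib, Finset.mul_sum, Pi.single_apply, mul_assoc]
      refine ⟨Pi.single k 1 + t • b, fun l hl => ?_, fun l hl => ?_, fun j => ?_⟩
      · have : l ≠ k := fun h => by simp [h, k] at hl
        simp [this, hb0 l (by omega)]
      · have : l = k := Fin.ext hl
        subst this
        simp [hb0 k (by simp [k])]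
      · rw [hsum]
        rcases (hb j).1.eq_or_lt with h0 | hlt
        · have hz := (hb j).2 h0.symm
          rw [← h0, mul_zero, add_zero]
          refine ⟨hN j k fun l hl => hz l hl, fun hk l hl => ?_⟩
          rcases hl.eq_or_lt with h | h
          · rwa [show l = k from Fin.ext h.symm]
          · exact hz l h
        · exact ⟨(ht j hlt).le, fun h => absurd h (ht j hlt).ne'⟩
  obtain ⟨a, h0, h1, h⟩ := key (n - k) k (by omega)
  exact ⟨a, ⟨h1 k rfl, fun j hj => h0 j hj⟩, fun j => (h j).1⟩

/-- The cone of a family without its `i`-th member is positive in all but the last dimension. -/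
def PositiveWithout {ι : Type} [Fintype ι] {n : ℕ} (u : ι → Fin (n + 1) → ℝ) (i : ι) : Prop :=
  ∀ k : Fin n, ∃ c : ι → ℝ, (∀ j, 0 ≤ c j) ∧ c i = 0 ∧
    UnitUpTo k.castSucc (∑ j, c j • u j)

section Basis

variable {ι : Type} [Fintype ι] {n : ℕ} (b : Module.Basis ι ℝ (Fin (n + 1) → ℝ))

theorem coord_sum_smul (c : ι → ℝ) (i : ι) : b.coord i (∑ j, c j • b j) = c i := by
  rw [b.coord_apply, b.repr_sum_self]

theorem PositiveFamily.coord_last_nonneg (hb : PositiveFamily b) (i : ι) :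
    0 ≤ b.coord i (Pi.single (Fin.last n) 1) := by
  obtain ⟨c, hc, hx⟩ := hb (Fin.last n)
  rw [← hx.map_eq (b.coord i) fun l hl => absurd hl (Fin.le_last l).not_gt, coord_sum_smul]
  exact hc i

theorem PositiveWithout.coord_last_pos (hb : PositiveFamily b) {i : ι}
    (hi : PositiveWithout b i) : 0 < b.coord i (Pi.single (Fin.last n) 1) := by
  refine (hb.coord_last_nonneg b i).lt_of_ne' fun h0 => ?_
  have hz : b.coord i = 0 := by
    refine linearMap_eq_zero_of_unitUpTo _ fun k => ?_
    induction k using Fin.lastCases with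
    | last =>
      have : UnitUpTo (Fin.last n) (Pi.single (Fin.last n) (1 : ℝ)) :=
        ⟨by simp, fun j hj => by simp [hj.ne]⟩
      exact ⟨⟨_, this, h0.le⟩, _, this, h0.ge⟩
    | cast k =>
      obtain ⟨c, -, hci, hx⟩ := hi k
      have h : b.coord i (∑ j, c j • b j) = 0 := by rw [coord_sum_smul, hci]
      exact ⟨⟨_, hx, h.le⟩, _, hx, h.ge⟩
  simpa [hz] using coord_sum_smul b (fun _ => 1) i

theorem PositiveWithout.unique (hb : PositiveFamily b) {i i' : ι}
    (hi : PositiveWithout b i) (hi' : PositiveWithout b i') : i = i' := by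
  have hp := hi.coord_last_pos b hb
  have hp' := hi'.coord_last_pos b hb
  by_contra hne
  set p := b.coord i (Pi.single (Fin.last n) 1) with hpdef
  set p' := b.coord i' (Pi.single (Fin.last n) 1) with hpdef'
  have hz : p' • b.coord i - p • b.coord i' = 0 := by
    refine linearMap_eq_zero_of_unitUpTo _ fun k => ?_
    induction k using Fin.lastCases with
    | last =>
      have : UnitUpTo (Fin.last n) (Pi.single (Fin.last n) (1 : ℝ)) :=
        ⟨by simp, fun j hj => by simp [hj.ne]⟩
      have h : (p' • b.coord i - p • b.coord i') (Pi.single (Fin.last n) 1) = 0 := by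
        rw [LinearMap.sub_apply, LinearMap.smul_apply, LinearMap.smul_apply, ← hpdef, ← hpdef',
          smul_eq_mul, smul_eq_mul, mul_comm, sub_self]
      exact ⟨⟨_, this, h.le⟩, _, this, h.ge⟩
    | cast k =>
      obtain ⟨c, hc, hci, hx⟩ := hi k
      obtain ⟨c', hc', hci', hx'⟩ := hi' k
      refine ⟨⟨_, hx, ?_⟩, _, hx', ?_⟩
      · rw [LinearMap.sub_apply, LinearMap.smul_apply, LinearMap.smul_apply, coord_sum_smul,
          coord_sum_smul, hci]
        simpa using mul_nonneg hp.le (hc i')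
      · rw [LinearMap.sub_apply, LinearMap.smul_apply, LinearMap.smul_apply, coord_sum_smul,
          coord_sum_smul, hci']
        simpa using mul_nonneg hp'.le (hc' i)
  have h := LinearMap.congr_fun hz (b i)
  simp [Module.Basis.coord_apply, hne] at h
  exact hp'.ne' h

theorem PositiveFamily.exists_positiveWithout (hb : PositiveFamily b) :
    ∃ i, PositiveWithout b i := by
  classical
  set e : Fin (n + 1) → ℝ := Pi.single (Fin.last n) 1 with he
  have hnonneg : ∀ i, 0 ≤ b.coord i e := hb.coord_last_nonneg b
  let S : Finset ι := {i | 0 < b.coord i e}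
  have hS : S.Nonempty := by
    by_contra hS
    have h0 : ∀ i, b.coord i e = 0 := fun i => le_antisymm (not_lt.1 fun h =>
      hS ⟨i, by simpa [S] using h⟩) (hnonneg i)
    have : e = 0 := b.forall_coord_eq_zero_iff.1 h0
    simpa [he] using congrFun this (Fin.last n)
  obtain ⟨i, hiS, hmin⟩ := exists_mem_forall_colexNonneg_sub S hS
    fun j (k : Fin n) => b.coord j (Pi.single k.castSucc 1) / b.coord j e
  have hi : 0 < b.coord i e := by simpa [S] using hiS
  let g : ι → (Fin (n + 1) → ℝ) →ₗ[ℝ] ℝ := fun j =>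
    b.coord j - (b.coord j e / b.coord i e) • b.coord i
  have hg : ∀ j, ColexNonneg fun k : Fin n => g j (Pi.single k.castSucc 1) := by
    intro j k hk
    rcases (hnonneg j).eq_or_lt with h0 | hpos
    · have hgj : g j = b.coord j := by simp only [g, ← h0, zero_div, zero_smul, sub_zero]
      simp only [hgj] at hk ⊢
      obtain ⟨c, hc, hx⟩ := hb k.castSucc
      rw [← hx.map_eq (b.coord j), coord_sum_smul]
      · exact hc j
      · intro l hl
        induction l using Fin.lastCases with
        | last => exact h0.symm
        | cast l => exact hk l (by simpa using hl)
    · have hval : ∀ k : Fin n, g j (Pi.single k.castSucc 1) = b.coord j e *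
          (b.coord j (Pi.single k.castSucc 1) / b.coord j e
            - b.coord i (Pi.single k.castSucc 1) / b.coord i e) := by
        intro k
        simp only [g, LinearMap.sub_apply, LinearMap.smul_apply, smul_eq_mul]
        have := hpos.ne'
        field_simp
      simp only [hval] at hk ⊢
      refine mul_nonneg hpos.le (hmin j (by simpa [S] using hpos) k fun l hl => ?_)
      simpa using (mul_eq_zero.1 (hk l hl)).resolve_left hpos.ne'
  refine ⟨i, fun k => ?_⟩
  obtain ⟨a, hak, ha⟩ := exists_combination_nonneg _ hg k
  let y : Fin (n + 1) → ℝ := ∑ l, a l • Pi.single l.castSucc 1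
  have hy : ∀ l : Fin n, y l.castSucc = a l := by
    intro l
    simp [y, Finset.sum_apply, Pi.single_apply]
  have hgy : ∀ j, g j y = ∑ l, a l * g j (Pi.single l.castSucc 1) := fun j => by
    simp only [y, map_sum, map_smul, smul_eq_mul]
  refine ⟨fun j => g j y, fun j => (ha j).trans_eq (hgy j).symm, ?_, ?_⟩
  · simp only [g, LinearMap.sub_apply, LinearMap.smul_apply, smul_eq_mul, div_self hi.ne', one_mul,
      sub_self]
  · have hsum : ∑ j, g j y • b j = y - (b.coord i y / b.coord i e) • e := by
      refine b.ext_elem fun j => ?_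
      rw [← b.coord_apply, ← b.coord_apply, coord_sum_smul]
      simp only [g, LinearMap.sub_apply, LinearMap.smul_apply, smul_eq_mul, map_sub, map_smul]
      ring
    rw [hsum]
    have hval : ∀ l : Fin n, (y - (b.coord i y / b.coord i e) • e) l.castSucc = a l := by
      intro l
      simp [hy, he]
    refine ⟨(hval k).trans hak.1, fun j hj => ?_⟩
    induction j using Fin.lastCases with
    | last => exact absurd hj (Fin.le_last _).not_gt
    | cast j => exact (hval j).trans (hak.2 j (by simpa using hj))

end Basis

theorem unitUpTo_castSucc_iff {n : ℕ} (k : Fin n) (x : Fin (n + 1) → ℝ) :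
    UnitUpTo k.castSucc x ↔ UnitUpTo k (Fin.init x : Fin n → ℝ) := by
  refine and_congr Iff.rfl ⟨fun h j hj => h j.castSucc (by simpa using hj), fun h j hj => ?_⟩
  induction j using Fin.lastCases with
  | last => exact absurd hj (Fin.le_last _).not_gt
  | cast j => exact h j (by simpa using hj)

theorem PositiveWithout.positiveFamily_init {ι : Type} [Fintype ι] [DecidableEq ι] {n : ℕ}
    {u : ι → Fin (n + 1) → ℝ} {i : ι} (hi : PositiveWithout u i) :
    PositiveFamily fun j : {j // j ≠ i} => (Fin.init (u j) : Fin n → ℝ) := by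
  intro k
  obtain ⟨c, hc, hci, hx⟩ := hi k
  refine ⟨fun j => c j, fun j => hc j, ?_⟩
  rw [unitUpTo_castSucc_iff, Fintype.sum_eq_add_sum_subtype_ne _ i, hci] at hx
  convert hx using 1
  funext l
  simp [Fin.init, Finset.sum_apply]

theorem PositiveFamily.comp_equiv {ι κ : Type} [Fintype ι] [Fintype κ] {n : ℕ}
    {u : ι → Fin n → ℝ} (h : PositiveFamily u) (σ : κ ≃ ι) :
    PositiveFamily fun k => u (σ k) := by
  intro k
  obtain ⟨c, hc, hx⟩ := h k
  refine ⟨fun j => c (σ j), fun j => hc _, ?_⟩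
  rwa [σ.sum_comp fun j => c j • u j]

theorem orderedFamily_succ_iff {n : ℕ} (v : Fin (n + 1) → Fin (n + 1) → ℝ) :
    OrderedFamily v ↔ OrderedFamily (fun k : Fin n => (Fin.init (v k.castSucc) : Fin n → ℝ)) ∧
      ∃ c : Fin (n + 1) → ℝ, (∀ i, 0 ≤ c i) ∧ UnitUpTo (Fin.last n) (∑ i, c i • v i) := by
  have hsum : ∀ c : Fin (n + 1) → ℝ, c (Fin.last n) = 0 →
      (Fin.init (∑ i, c i • v i) : Fin n → ℝ)
        = ∑ k : Fin n, c k.castSucc • (Fin.init (v k.castSucc) : Fin n → ℝ) := by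
    intro c hc
    funext l
    simp [Fin.init, Finset.sum_apply, Fin.sum_univ_castSucc, hc]
  constructor
  · refine fun h => ⟨fun k => ?_, ?_⟩
    · obtain ⟨c, hc, hck, hx⟩ := h k.castSucc
      refine ⟨fun j => c j.castSucc, fun j => hc _, fun j hj => hck _ (by simpa using hj), ?_⟩
      rw [← hsum c (hck _ (Fin.castSucc_lt_last k)), ← unitUpTo_castSucc_iff]
      exact hx
    · obtain ⟨c, hc, -, hx⟩ := h (Fin.last n)
      exact ⟨c, hc, hx⟩
  · rintro ⟨h, c, hc, hx⟩ k
    induction k using Fin.lastCases with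
    | last => exact ⟨c, hc, fun i hi => absurd hi (Fin.le_last i).not_gt, hx⟩
    | cast k =>
      obtain ⟨d, hd, hdk, hy⟩ := h k
      let d' : Fin (n + 1) → ℝ := Fin.snoc (α := fun _ => ℝ) d 0
      have hd' : ∀ j : Fin n, d' j.castSucc = d j := fun j => by simp [d']
      have hlast : d' (Fin.last n) = 0 := by simp [d']
      refine ⟨d', fun j => ?_, fun j hj => ?_, ?_⟩
      · induction j using Fin.lastCases with
        | last => exact hlast.ge
        | cast j => exact (hd j).trans_eq (hd' j).symm
      · induction j using Fin.lastCases with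
        | last => exact hlast
        | cast j => exact (hd' j).trans (hdk j (by simpa using hj))
      · rw [unitUpTo_castSucc_iff, hsum d' hlast]
        simpa only [hd'] using hy

theorem OrderedFamily.positiveWithout_last {ι : Type} [Fintype ι] {n : ℕ}
    {u : ι → Fin (n + 1) → ℝ} (σ : Fin (n + 1) ≃ ι) (h : OrderedFamily fun k => u (σ k)) :
    PositiveWithout u (σ (Fin.last n)) := by
  intro k
  obtain ⟨c, hc, hck, hx⟩ := h k.castSucc
  refine ⟨fun j => c (σ.symm j), fun j => hc _, ?_, ?_⟩
  · simpa using hck _ (Fin.castSucc_lt_last k)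
  · rw [← σ.sum_comp]
    simpa using hx

theorem PositiveFamily.existsUnique_orderedFamily {n : ℕ} {ι : Type} [Fintype ι]
    {u : ι → Fin n → ℝ} (hcard : Fintype.card ι = n) (hu : PositiveFamily u) :
    ∃! w : Fin n → ι, OrderedFamily fun k => u (w k) := by
  classical
  induction n generalizing ι with
  | zero => exact ⟨Fin.elim0, fun k => k.elim0, fun w _ => Subsingleton.elim _ _⟩
  | succ n ih =>
    have : Nonempty ι := Fintype.card_pos_iff.1 (by omega)
    obtain ⟨b, rfl⟩ : ∃ b : Module.Basis ι ℝ (Fin (n + 1) → ℝ), ⇑b = u :=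
      ⟨basisOfLinearIndependentOfCardEqFinrank (hu.linearIndependent hcard) (by simpa using hcard),
        by simp⟩
    obtain ⟨i, hi⟩ := hu.exists_positiveWithout b
    obtain ⟨w', hw', huniq⟩ := ih (ι := {j // j ≠ i}) (by simp [hcard]) hi.positiveFamily_init
    refine ⟨Fin.snoc (α := fun _ => ι) (fun k => (w' k : ι)) i, ?_, fun w hw => ?_⟩
    · have hinj' : Function.Injective w' := hw'.linearIndependent.injective.of_comp (f :=
        fun j : {j // j ≠ i} => (Fin.init (b j) : Fin n → ℝ))
      have hinj : Function.Injective (Fin.snoc (α := fun _ => ι) (fun k => (w' k : ι)) i) := by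
        rw [Fin.snoc_injective_iff]
        exact ⟨Subtype.val_injective.comp hinj', by rintro ⟨k, hk⟩; exact (w' k).2 hk⟩
      have hbij := (Fintype.bijective_iff_injective_and_card _).2 ⟨hinj, by simp [hcard]⟩
      exact (orderedFamily_succ_iff _).2 ⟨by simpa using hw',
        hu.comp_equiv (Equiv.ofBijective _ hbij) (Fin.last n)⟩
    · have hinj : Function.Injective w := hw.linearIndependent.injective.of_comp
      have hbij := (Fintype.bijective_iff_injective_and_card w).2 ⟨hinj, by simp [hcard]⟩
      have hlast : w (Fin.last n) = i := PositiveWithout.unique b hu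
        (OrderedFamily.positiveWithout_last (Equiv.ofBijective w hbij) hw) hi
      have hne : ∀ k : Fin n, w k.castSucc ≠ i := fun k hk =>
        (Fin.castSucc_lt_last k).ne (hinj (hk.trans hlast.symm))
      have heq := huniq (fun k => ⟨w k.castSucc, hne k⟩) ((orderedFamily_succ_iff _).1 hw).1
      funext k
      induction k using Fin.lastCases with
      | last => simp [hlast]
      | cast k => simp [← heq]

/-- If `u₁,…,u_s ∈ ℝ^s` are linearly independent and generate a positive cone,
then there is a unique permutation `w` of `{1,…,s}` such that
`(u_{w(1)},…,u_{w(s)})` is positively ordered. -/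
theorem existsUnique_perm_positivelyOrdered {s : ℕ}
    (u : Fin s → (Fin s → ℝ)) (hu : LinearIndependent ℝ u)
    (C : Set (Fin s → ℝ))
    (hC : C = {x | ∃ lam : Fin s → ℝ, (∀ i, 0 ≤ lam i) ∧ x = ∑ i, lam i • u i})
    (hpos : IsPositiveCone C) :
    ∃! w : Equiv.Perm (Fin s), PositivelyOrdered (fun j => u (w j)) := by
  subst hC
  simp only [positivelyOrdered_iff_orderedFamily]
  obtain ⟨w, hw, huniq⟩ := hpos.positiveFamily.existsUnique_orderedFamily (Fintype.card_fin s)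
  have hinj : Function.Injective w := hw.linearIndependent.injective.of_comp
  exact ⟨Equiv.ofBijective w hinj.bijective_of_finite, hw, fun w' hw' =>
    Equiv.coe_fn_injective (huniq w' hw')⟩

end
end

section
/- Let s ≥ 2, let u₁,…,u_s ∈ ℝ^s be linearly independent generating the full-dimensional simplicial cone C := {Σ λ_j u_j : λ_j ≥ 0}, and fix k with 1 < k ≤ s. Assume (0,…,0,1) ∈ pr_j(C) ⊆ ℝ^j for every j with k < j ≤ s. For a permutation w of {1,…,s}, say the tuple (u_{w(1)},…,u_{w(s)}) is k-WPO if (a) the (s−1)-tuple obtained by deleting the k-th entry and then applying to each remaining vector the projection ℝ^s → ℝ^{s−1} that deletes the k-th coordinate is positively ordered, and (b) u_{w(k)} ∉ C^{(k)}, where C^{(k)} is the smallest face of C containing C ∩ ker(pr_k). Let λ := Σ_w det(A_w), the sum over all permutations w for which (u_{w(1)},…,u_{w(s)}) is k-WPO, where A_w is the s × s matrix with columns u_{w(1)},…,u_{w(s)}. Then λ ≠ 0 if and only if there is exactly one permutation w such that (u_{w(1)},…,u_{w(s)}) is k-WPO. Moreover, the following are equivalent: (1) λ > 0; (2) λ ≠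 0 and (0,…,0,1) ∈ pr_k(C); (3) λ ≠ 0 and (0,…,0,−1) ∉ pr_k(C); (4) C is positive and (0,…,0,−1) ∉ pr_k(C). -/
noncomputable section

open scoped Classical

/-- The index embedding `Fin (s-1) → Fin s` skipping the `k`-th position
(1-based), i.e. the 0-based index `k-1`. -/
def skipIdx (s k : ℕ) (j : Fin (s - 1)) : Fin s :=
  if _ : (j : ℕ) < k - 1 then ⟨(j : ℕ), by have := j.isLt; omega⟩
  else ⟨(j : ℕ) + 1, by have := j.isLt; omega⟩

/-- The last nonzero coordinate of `a` exists and is positive. -/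
def LexPos {m : ℕ} (a : Fin m → ℝ) : Prop :=
  ∃ j, 0 < a j ∧ ∀ l, j < l → a l = 0

theorem LexPos.add {m : ℕ} {a b : Fin m → ℝ} (ha : LexPos a) (hb : LexPos b) :
    LexPos (a + b) := by
  obtain ⟨i, hi, hi'⟩ := ha
  obtain ⟨j, hj, hj'⟩ := hb
  rcases lt_trichotomy i j with h | h | h
  · exact ⟨j, by simpa [hi' j h] using hj, fun l hl => by simp [hi' l (h.trans hl), hj' l hl]⟩
  · subst h
    exact ⟨i, add_pos hi hj, fun l hl => by simp [hi' l hl, hj' l hl]⟩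
  · exact ⟨i, by simpa [hj' i h] using hi, fun l hl => by simp [hj' l (h.trans hl), hi' l hl]⟩

theorem LexPos.smul {m : ℕ} {a : Fin m → ℝ} (ha : LexPos a) {c : ℝ} (hc : 0 < c) :
    LexPos (c • a) := by
  obtain ⟨i, hi, hi'⟩ := ha
  exact ⟨i, mul_pos hc hi, fun l hl => by simp [hi' l hl]⟩

theorem not_lexPos_zero {m : ℕ} : ¬ LexPos (0 : Fin m → ℝ) := by
  rintro ⟨i, hi, -⟩
  simp at hi

theorem LexPos.not_neg {m : ℕ} {a : Fin m → ℝ} (ha : LexPos a) : ¬ LexPos (-a) := fun h =>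
  not_lexPos_zero (by simpa using ha.add h)

theorem exists_last_ne_zero {m : ℕ} {a : Fin m → ℝ} (ha : a ≠ 0) :
    ∃ j, a j ≠ 0 ∧ ∀ l, j < l → a l = 0 := by
  have hne : (Finset.univ.filter fun j => a j ≠ 0).Nonempty := by
    obtain ⟨j, hj⟩ := Function.ne_iff.1 ha
    exact ⟨j, by simpa using hj⟩
  obtain ⟨j, hj, hmax⟩ := Finset.exists_max_image _ id hne
  refine ⟨j, by simpa using hj, fun l hl => ?_⟩
  by_contra h
  exact absurd (hmax l (by simpa using h)) (not_le.2 hl)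

theorem lexPos_or_neg {m : ℕ} {a : Fin m → ℝ} (ha : a ≠ 0) : LexPos a ∨ LexPos (-a) := by
  obtain ⟨j, hj, hj'⟩ := exists_last_ne_zero ha
  rcases lt_or_gt_of_ne hj with h | h
  · exact Or.inr ⟨j, by simpa using h, fun l hl => by simp [hj' l hl]⟩
  · exact Or.inl ⟨j, h, hj'⟩

/-- Pairing a functional with vectors that have prescribed initial coordinates detects its
last nonzero coordinate. -/
theorem sum_mul_eq_of_last {m : ℕ} {a x : Fin m → ℝ} {j : Fin m}
    (ha : ∀ l, j < l → a l = 0) (hx : ∀ l ≤ j, x l = if l = j then 1 else 0) :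
    ∑ l, a l * x l = a j := by
  rw [Finset.sum_eq_single j]
  · simp [hx j le_rfl]
  · intro l _ hl
    rcases lt_or_gt_of_ne hl with h | h
    · simp [hx l h.le, hl]
    · simp [ha l h]
  · simp

theorem div_pos_of_mul_pos {a b : ℝ} (h : 0 < a * b) : 0 < b / a := by
  rcases mul_pos_iff.1 h with ⟨ha, hb⟩ | ⟨ha, hb⟩
  · exact div_pos hb ha
  · exact div_pos_of_neg_of_neg hb ha

/-- A reformulation of being positively ordered: every initial segment of `v` generates, in its
projection, the last unit vector. -/
def FlagPositive {m : ℕ} (v : Fin m → Fin m → ℝ) : Prop :=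
  ∀ k, ∃ a : Fin m → ℝ, (∀ i, 0 ≤ a i) ∧ (∀ i, k < i → a i = 0) ∧
    ∀ j ≤ k, ∑ i, a i * v i j = if j = k then 1 else 0

theorem smul_lastUnit_mem_iff {s : ℕ} (C : Set (Fin s → ℝ)) (j : Fin s) (σ : ℝ) :
    σ • lastUnit (j + 1) ∈ prProj (j + 1) j.isLt '' C ↔
      ∃ x ∈ C, ∀ l ≤ j, x l = if l = j then σ else 0 := by
  constructor
  · rintro ⟨x, hx, h⟩
    refine ⟨x, hx, fun l hl => ?_⟩
    have := congrFun h ⟨l, Nat.lt_succ_of_le hl⟩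
    simpa [prProj, lastUnit, Fin.ext_iff] using this
  · rintro ⟨x, hx, h⟩
    refine ⟨x, hx, funext fun l => ?_⟩
    have := h (Fin.castLE j.isLt l) (Nat.lt_succ_iff.1 l.isLt)
    simpa [prProj, lastUnit, Fin.ext_iff] using this

theorem lastUnit_mem_iff {s : ℕ} (C : Set (Fin s → ℝ)) (j : Fin s) :
    lastUnit (j + 1) ∈ prProj (j + 1) j.isLt '' C ↔
      ∃ x ∈ C, ∀ l ≤ j, x l = if l = j then 1 else 0 := by
  simpa using smul_lastUnit_mem_iff C j 1

theorem isPositiveCone_iff {s : ℕ} (C : Set (Fin s → ℝ)) :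
    IsPositiveCone C ↔ ∀ j : Fin s, ∃ x ∈ C, ∀ l ≤ j, x l = if l = j then 1 else 0 := by
  constructor
  · intro h j
    exact (lastUnit_mem_iff C j).1 (h _ (by omega) _)
  · intro h k hk hks
    obtain ⟨k, rfl⟩ : ∃ k', k = k' + 1 := ⟨k - 1, by omega⟩
    exact (lastUnit_mem_iff C ⟨k, hks⟩).2 (h _)

theorem positivelyOrdered_iff {m : ℕ} (v : Fin m → Fin m → ℝ) :
    PositivelyOrdered v ↔ FlagPositive v := by
  constructor
  · intro h k
    obtain ⟨x, ⟨a, ha, ha', rfl⟩, hx⟩ :=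
      (isPositiveCone_iff _).1 (h (k + 1) (by omega) k.isLt) (Fin.last k)
    refine ⟨a, ha, fun i hi => ha' i (by have : (k : ℕ) < i := hi; omega), fun j hj => ?_⟩
    have := hx ⟨j, Nat.lt_succ_of_le hj⟩ (Fin.le_last _)
    simpa [prProj, Fin.ext_iff, Finset.sum_apply] using this
  · intro h k hk hkm
    refine (isPositiveCone_iff _).2 fun j => ?_
    obtain ⟨a, ha, ha', hx⟩ := h (Fin.castLE hkm j)
    refine ⟨_, ⟨a, ha, fun i hi => ha' i ?_, rfl⟩, fun l hl => ?_⟩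
    · have := j.isLt
      rw [Fin.lt_def, Fin.val_castLE]
      omega
    · have := hx (Fin.castLE hkm l) hl
      simpa [prProj, Fin.ext_iff, Finset.sum_apply] using this

theorem FlagPositive.castSucc {m : ℕ} {v : Fin (m + 1) → Fin (m + 1) → ℝ} (h : FlagPositive v) :
    FlagPositive fun i j => v (Fin.castSucc i) (Fin.castSucc j) := by
  intro k
  obtain ⟨a, ha, ha', hx⟩ := h k.castSucc
  refine ⟨fun i => a i.castSucc, fun i => ha _, fun i hi => ha' _ (by simpa using hi),
    fun j hj => ?_⟩
  have := hx j.castSucc (by simpa using hj)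
  simpa [Fin.sum_univ_castSucc, ha' (Fin.last m) (Fin.castSucc_lt_last k)] using this

theorem FlagPositive.of_castSucc {m : ℕ} {v : Fin (m + 1) → Fin (m + 1) → ℝ}
    (h : FlagPositive fun i j => v (Fin.castSucc i) (Fin.castSucc j))
    (hlast : ∃ a : Fin (m + 1) → ℝ, (∀ i, 0 ≤ a i) ∧
      ∀ j, ∑ i, a i * v i j = if j = Fin.last m then 1 else 0) :
    FlagPositive v := by
  intro k
  induction k using Fin.lastCases with
  | last =>
    obtain ⟨a, ha, hx⟩ := hlast
    exact ⟨a, ha, fun i hi => absurd (Fin.le_last i) (not_le.2 hi), fun j _ => hx j⟩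
  | cast k =>
    obtain ⟨a, ha, ha', hx⟩ := h k
    refine ⟨Fin.snoc a 0, fun i => ?_, fun i => ?_, fun j hj => ?_⟩
    · induction i using Fin.lastCases with
      | last => simp
      | cast i => simpa using ha i
    · induction i using Fin.lastCases with
      | last => simp
      | cast i => simpa using ha' i
    · induction j using Fin.lastCases with
      | last => exact absurd hj (not_le.2 (Fin.castSucc_lt_last k))
      | cast j => simpa [Fin.sum_univ_castSucc] using hx j (by simpa using hj)

theorem FlagPositive.det_pos {m : ℕ} {v : Fin m → Fin m → ℝ} (h : FlagPositive v) :
    0 < (Matrix.of v).det := by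
  choose a ha ha' hx using h
  have h1 : (Matrix.of a).det = ∏ i, a i i :=
    Matrix.det_of_isLowerTriangular _ fun i j hij => ha' i j hij
  have h2 : (Matrix.of a * Matrix.of v).det = 1 := by
    rw [Matrix.det_of_isUpperTriangular]
    · exact Finset.prod_eq_one fun i _ => by
        simpa [Matrix.mul_apply] using hx i i le_rfl
    · intro i j hij
      have : j < i := hij
      simpa [Matrix.mul_apply, this.ne] using hx i j this.le
  rw [Matrix.det_mul, h1] at h2
  exact pos_of_mul_pos_right (h2 ▸ one_pos) (Finset.prod_nonneg fun i _ => ha i i)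

/-- A functional that is nonnegative on a positively ordered basis is lexicographically
nonnegative. -/
theorem FlagPositive.lexPos {m : ℕ} {v : Fin m → Fin m → ℝ} (h : FlagPositive v)
    {f : Fin m → ℝ} (hf : f ≠ 0) (hv : ∀ i, 0 ≤ ∑ j, f j * v i j) : LexPos f := by
  obtain ⟨j, hj, hj'⟩ := exists_last_ne_zero hf
  obtain ⟨a, ha, -, hx⟩ := h j
  refine ⟨j, lt_of_le_of_ne ?_ hj.symm, hj'⟩
  rw [← sum_mul_eq_of_last hj' hx]
  calc 0 ≤ ∑ i, a i * ∑ l, f l * v i l :=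
        Finset.sum_nonneg fun i _ => mul_nonneg (ha i) (hv i)
    _ = ∑ l, f l * ∑ i, a i * v i l := by
        simp only [Finset.mul_sum]
        rw [Finset.sum_comm]
        exact Finset.sum_congr rfl fun l _ => Finset.sum_congr rfl fun i _ => by ring

/-- The functionals `B i` are biorthogonal to the vectors `v i`. -/
structure IsDualFamily {ι : Type*} {m : ℕ} (B v : ι → Fin m → ℝ) : Prop where
  self : ∀ i, ∑ j, B i j * v i j = 1
  ne : ∀ i i', i ≠ i' → ∑ j, B i j * v i' j = 0

/-- Row `i'` of a matrix after elimination of column `k` with pivot row `i`. -/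
def pivotRow {ι : Type*} {m : ℕ} (B : ι → Fin (m + 1) → ℝ) (k : Fin (m + 1)) (i i' : ι) :
    Fin m → ℝ :=
  fun j => B i' (k.succAbove j) - B i' k / B i k * B i (k.succAbove j)

section Dual

variable {ι : Type*} {m : ℕ}

theorem IsDualFamily.pivot {B v : ι → Fin (m + 1) → ℝ} (h : IsDualFamily B v)
    {k : Fin (m + 1)} {i : ι} (hi : B i k ≠ 0) :
    IsDualFamily (fun x : {x // x ≠ i} => pivotRow B k i x)
      (fun x j => v x (k.succAbove j)) := by
  have key : ∀ x y : ι, y ≠ i → ∑ j, pivotRow B k i x j * v y (k.succAbove j) =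
      ∑ j, B x j * v y j := by
    intro x y hy
    have h1 := h.ne i y hy.symm
    rw [Fin.sum_univ_succAbove _ k] at h1 ⊢
    simp only [pivotRow, sub_mul, Finset.sum_sub_distrib, mul_assoc, ← Finset.mul_sum]
    rw [eq_neg_of_add_eq_zero_right h1]
    field_simp
    ring
  exact ⟨fun x => (key x x x.2).trans (h.self x),
    fun x y hxy => (key x y y.2).trans (h.ne x y (Subtype.coe_ne_coe.2 hxy))⟩

theorem IsDualFamily.pivotRow_ne_zero {B v : ι → Fin (m + 1) → ℝ} (h : IsDualFamily B v)
    {k : Fin (m + 1)} {i i' : ι} (hi : B i k ≠ 0) (hne : i' ≠ i) : pivotRow B k i i' ≠ 0 := by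
  intro h0
  have := (h.pivot hi).self ⟨i', hne⟩
  simp [h0] at this

theorem pivotRow_swap {B : ι → Fin (m + 1) → ℝ} {k : Fin (m + 1)} {i i' : ι}
    (hi : B i k ≠ 0) (hi' : B i' k ≠ 0) :
    pivotRow B k i' i = (B i k / B i' k) • -pivotRow B k i i' := by
  funext j
  simp only [pivotRow, Pi.smul_apply, Pi.neg_apply, smul_eq_mul]
  field_simp
  ring

theorem pivotRow_trans {B : ι → Fin (m + 1) → ℝ} {k : Fin (m + 1)} {i i' i'' : ι}
    (hi' : B i' k ≠ 0) :
    pivotRow B k i i'' = pivotRow B k i' i'' + (B i'' k / B i' k) • pivotRow B k i i' := by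
  funext j
  simp only [pivotRow, Pi.smul_apply, Pi.add_apply, smul_eq_mul]
  field_simp
  ring

theorem pivotRow_self {B : ι → Fin (m + 1) → ℝ} {k : Fin (m + 1)} {i : ι}
    (hi : B i k ≠ 0) : pivotRow B k i i = 0 := by
  funext j
  simp [pivotRow, hi]

/-- Two rows whose pivot entries have the same sign cannot each dominate the other. -/
theorem LexPos.not_swap {B : ι → Fin (m + 1) → ℝ} {k : Fin (m + 1)} {i i' : ι}
    (h : LexPos (pivotRow B k i i')) (hii' : 0 < B i k * B i' k) :
    ¬ LexPos (pivotRow B k i' i) := by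
  have hi : B i k ≠ 0 := left_ne_zero_of_mul hii'.ne'
  have hi' : B i' k ≠ 0 := right_ne_zero_of_mul hii'.ne'
  intro h2
  rw [pivotRow_swap hi' hi] at h
  have : 0 < B i' k / B i k := div_pos_of_mul_pos hii'
  exact h2.not_neg (by
    have := h.smul (inv_pos.2 this)
    rwa [smul_smul, inv_mul_cancel₀ (by positivity), one_smul] at this)

/-- Among rows whose pivot entries have the same sign, one is dominated by all the others. -/
theorem IsDualFamily.exists_pivot [Finite ι] {B v : ι → Fin (m + 1) → ℝ} (h : IsDualFamily B v)
    {k : Fin (m + 1)} {S : Set ι} (hne : S.Nonempty)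
    (hS : ∀ i ∈ S, ∀ i' ∈ S, 0 < B i k * B i' k) :
    ∃ i ∈ S, ∀ i' ∈ S, i' ≠ i → LexPos (pivotRow B k i i') := by
  have hk : ∀ i ∈ S, B i k ≠ 0 := fun i hi => left_ne_zero_of_mul (hS i hi i hi).ne'
  let r : S → S → Prop := fun i i' => LexPos (pivotRow B k i i')
  have : IsTrans S r := ⟨fun a b c hab hbc => by
    show LexPos _
    rw [pivotRow_trans (hk b b.2)]
    exact LexPos.add hbc (hab.smul (div_pos_of_mul_pos (hS b b.2 c c.2)))⟩
  have : Std.Irrefl r := ⟨fun a ha => not_lexPos_zero (by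
    have ha' : LexPos _ := ha
    rwa [pivotRow_self (hk a a.2)] at ha')⟩
  obtain ⟨i, -, hi⟩ := (Finite.wellFounded_of_trans_of_irrefl r).has_min Set.univ
    ⟨⟨_, hne.some_mem⟩, trivial⟩
  refine ⟨i, i.2, fun i' hi' hii' => ?_⟩
  refine (lexPos_or_neg (h.pivotRow_ne_zero (hk i i.2) hii')).resolve_right fun hneg => ?_
  apply hi ⟨i', hi'⟩ trivial
  show LexPos _
  rw [pivotRow_swap (hk i i.2) (hk i' hi')]
  exact hneg.smul (div_pos_of_mul_pos (hS i' hi' i i.2))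

/-- If the vectors `v (e j)` with coordinate `k` deleted are positively ordered, then `k` is an
admissible pivot position for the remaining index `i`. -/
theorem IsDualFamily.pivot_of_flagPositive {B v : ι → Fin (m + 1) → ℝ} (h : IsDualFamily B v)
    {k : Fin (m + 1)} {i : ι} {e : Fin m → ι} (he : ∀ j, e j ≠ i)
    (hv : FlagPositive fun j l => v (e j) (k.succAbove l)) :
    B i k ≠ 0 ∧ ∀ i', i' ≠ i → LexPos (pivotRow B k i i') := by
  have hi : B i k ≠ 0 := by
    intro h0
    have hz : ∀ j, ∑ l, B i (k.succAbove l) * v (e j) (k.succAbove l) = 0 := fun j => by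
      simpa [Fin.sum_univ_succAbove _ k, h0] using h.ne i (e j) (he j).symm
    have hf : (fun l => B i (k.succAbove l)) ≠ 0 := by
      intro hf
      have h1 := h.self i
      rw [Fin.sum_univ_succAbove _ k] at h1
      simp [h0, fun l => congrFun hf l] at h1
    exact (hv.lexPos hf fun j => (hz j).ge).not_neg
      (hv.lexPos (neg_ne_zero.2 hf) fun j => by simp [hz j])
  refine ⟨hi, fun i' hi' => hv.lexPos (h.pivotRow_ne_zero hi hi') fun j => ?_⟩
  by_cases hj : e j = i'
  · subst hj
    exact ((h.pivot hi).self ⟨e j, hi'⟩).ge.trans' zero_le_one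
  · exact ((h.pivot hi).ne ⟨i', hi'⟩ ⟨e j, he j⟩ (by simpa using Ne.symm hj)).ge

theorem IsDualFamily.flagPositive_unique {B v : ι → Fin m → ℝ} (h : IsDualFamily B v)
    {e e' : Fin m → ι} (he : Function.Injective e) (he' : Function.Injective e')
    (hv : FlagPositive (v ∘ e)) (hv' : FlagPositive (v ∘ e')) : e = e' := by
  induction m generalizing ι with
  | zero => exact Subsingleton.elim _ _
  | succ m ih =>
    have key : ∀ f : Fin (m + 1) → ι, Function.Injective f → FlagPositive (v ∘ f) →
        0 < B (f (Fin.last m)) (Fin.last m) ∧ ∀ i', i' ≠ f (Fin.last m) →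
          LexPos (pivotRow B (Fin.last m) (f (Fin.last m)) i') := by
      intro f hf hvf
      obtain ⟨h0, h1⟩ := h.pivot_of_flagPositive (k := Fin.last m) (i := f (Fin.last m))
        (e := fun j => f j.castSucc) (fun j => hf.ne (Fin.castSucc_lt_last j).ne)
        (by simpa [Fin.succAbove_last] using hvf.castSucc)
      refine ⟨lt_of_le_of_ne ?_ h0.symm, h1⟩
      obtain ⟨a, ha, -, hx⟩ := hvf (Fin.last m)
      rw [← sum_mul_eq_of_last (a := B (f (Fin.last m)))
        (fun l hl => absurd (Fin.le_last l) (not_le.2 hl)) hx]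
      calc 0 ≤ ∑ i, a i * ∑ l, B (f (Fin.last m)) l * v (f i) l := by
            refine Finset.sum_nonneg fun i _ => mul_nonneg (ha i) ?_
            by_cases hfi : f (Fin.last m) = f i
            · rw [← hfi, h.self]
              exact zero_le_one
            · rw [h.ne _ _ hfi]
        _ = _ := by
            simp only [Finset.mul_sum, Function.comp]
            rw [Finset.sum_comm]
            exact Finset.sum_congr rfl fun l _ => Finset.sum_congr rfl fun i _ => by ring
    obtain ⟨hp, hl⟩ := key e he hv
    obtain ⟨hp', hl'⟩ := key e' he' hv'
    have hlast : e (Fin.last m) = e' (Fin.last m) := by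
      by_contra hne
      exact (hl _ (Ne.symm hne)).not_swap (mul_pos hp hp') (hl' _ hne)
    have hne : ∀ j : Fin m, e j.castSucc ≠ e (Fin.last m) :=
      fun j => he.ne (Fin.castSucc_lt_last j).ne
    have hne' : ∀ j : Fin m, e' j.castSucc ≠ e (Fin.last m) :=
      fun j => hlast ▸ he'.ne (Fin.castSucc_lt_last j).ne
    have := ih (h.pivot hp.ne') (e := fun j => ⟨e j.castSucc, hne j⟩)
      (e' := fun j => ⟨e' j.castSucc, hne' j⟩)
      (fun a b hab => Fin.castSucc_injective m (he (Subtype.ext_iff.1 hab)))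
      (fun a b hab => Fin.castSucc_injective m (he' (Subtype.ext_iff.1 hab)))
      (by simpa [Fin.succAbove_last] using! hv.castSucc)
      (by simpa [Fin.succAbove_last] using! hv'.castSucc)
    funext j
    induction j using Fin.lastCases with
    | last => exact hlast
    | cast j => exact Subtype.ext_iff.1 (congrFun this j)

theorem exists_equiv_insert {i : ι} (k : Fin (m + 1)) (e : Fin m ≃ {x // x ≠ i}) :
    ∃ f : Fin (m + 1) ≃ ι, f k = i ∧ ∀ j, f (k.succAbove j) = e j :=
  ⟨(finSuccEquiv' k).trans ((Equiv.optionCongr e).trans (Equiv.optionSubtypeNe i)),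
    by simp, by simp⟩

theorem IsDualFamily.sum_mul_eq [Fintype ι] {B v : ι → Fin m → ℝ} (h : IsDualFamily B v)
    (hcard : Fintype.card ι = m) (j l : Fin m) :
    ∑ i, B i j * v i l = if l = j then 1 else 0 := by
  have h1 : Matrix.of B * (Matrix.of v).transpose = 1 := by
    ext i i'
    by_cases hi : i = i'
    · subst hi
      simpa [Matrix.mul_apply] using h.self i
    · simpa [Matrix.mul_apply, Matrix.one_apply, hi] using h.ne i i' hi
  rw [Matrix.mul_eq_one_comm_of_card_eq _ _ _ (by simpa using hcard)] at h1
  simpa [Matrix.mul_apply, Matrix.one_apply, mul_comm] using congrFun (congrFun h1 l) j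

theorem IsDualFamily.exists_flagPositive [Fintype ι] {B v : ι → Fin m → ℝ}
    (h : IsDualFamily B v) (hcard : Fintype.card ι = m) (hB : ∀ i, LexPos (B i)) :
    ∃ e : Fin m ≃ ι, FlagPositive (v ∘ e) := by
  induction m generalizing ι with
  | zero => exact ⟨(Fintype.equivFinOfCardEq hcard).symm, fun k => k.elim0⟩
  | succ m ih =>
    have hnn : ∀ i, 0 ≤ B i (Fin.last m) := by
      intro i
      obtain ⟨j, hj, hj'⟩ := hB i
      rcases (Fin.le_last j).lt_or_eq with hlt | rfl
      · exact (hj' _ hlt).ge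
      · exact hj.le
    have hsum := h.sum_mul_eq hcard (Fin.last m)
    obtain ⟨i₀, hi₀⟩ : ∃ i, 0 < B i (Fin.last m) := by
      by_contra! hcon
      have h0 : ∀ i, B i (Fin.last m) = 0 := fun i => le_antisymm (hcon i) (hnn i)
      simpa [h0] using hsum (Fin.last m)
    obtain ⟨i, hi, hmin⟩ := h.exists_pivot (k := Fin.last m) (S := {i | 0 < B i (Fin.last m)})
      ⟨i₀, hi₀⟩ (fun i hi i' hi' => mul_pos hi hi')
    have hi' : B i (Fin.last m) ≠ 0 := (show 0 < B i (Fin.last m) from hi).ne'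
    obtain ⟨e, he⟩ := ih (h.pivot hi') (by simp [Fintype.card_subtype_compl, hcard]) (by
      rintro ⟨x, hx⟩
      rcases (hnn x).lt_or_eq with hpos | hzero
      · exact hmin x hpos hx
      · obtain ⟨j, hj, hj'⟩ := hB x
        induction j using Fin.lastCases with
        | last => exact absurd hzero hj.ne
        | cast j =>
          refine ⟨j, by simpa [pivotRow, ← hzero, Fin.succAbove_last] using hj, fun l hl => ?_⟩
          simpa [pivotRow, ← hzero, Fin.succAbove_last] using
            hj' l.castSucc (by simpa using hl))
    obtain ⟨f, -, hf⟩ := exists_equiv_insert (Fin.last m) e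
    simp only [Fin.succAbove_last] at hf
    refine ⟨f, FlagPositive.of_castSucc ?_ ⟨fun j => B (f j) (Fin.last m), fun j => hnn _,
      fun j => ?_⟩⟩
    · simpa [hf, Fin.succAbove_last] using! he
    · rw [← hsum j]
      exact f.sum_comp fun i => B i (Fin.last m) * v i j

end Dual

/-- The cone of vectors on which all functionals `B i` are nonnegative. -/
def dualCone {n : ℕ} (B : Fin n → Fin n → ℝ) : Set (Fin n → ℝ) :=
  {x | ∀ i, 0 ≤ B i ⬝ᵥ x}

/-- The indices of the functionals that do not vanish on the vectors of `dualCone B` whose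
coordinates up to `κ` are zero. -/
def faceIndices {n : ℕ} (B : Fin n → Fin n → ℝ) (κ : Fin n) : Set (Fin n) :=
  {i | ∃ x ∈ dualCone B, (∀ l ≤ κ, x l = 0) ∧ 0 < B i ⬝ᵥ x}

/-- `C` projects onto the last unit vector in dimension `j + 1`. -/
def ContainsUnit {n : ℕ} (C : Set (Fin n → ℝ)) (j : Fin n) : Prop :=
  ∃ x ∈ C, ∀ l ≤ j, x l = if l = j then 1 else 0

section FaceIndices

variable {n : ℕ} {B : Fin (n + 1) → Fin (n + 1) → ℝ} {κ : Fin (n + 1)}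

theorem exists_last_pos_of_containsUnit (hup : ∀ j, κ < j → ContainsUnit (dualCone B) j)
    {i j : Fin (n + 1)} (hj : κ < j) (hij : B i j ≠ 0) :
    i ∈ faceIndices B κ ∧ ∃ j, κ < j ∧ 0 < B i j ∧ ∀ l, j < l → B i l = 0 := by
  obtain ⟨l, hl, hl'⟩ := exists_last_ne_zero (Function.ne_iff.2 ⟨j, hij⟩ : B i ≠ 0)
  have hκl : κ < l := hj.trans_le (not_lt.1 fun h => hij (hl' j h))
  obtain ⟨x, hx, hx'⟩ := hup l hκl
  have heq : B i ⬝ᵥ x = B i l := sum_mul_eq_of_last hl' hx'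
  have hpos : 0 < B i l := lt_of_le_of_ne (heq ▸ hx i) hl.symm
  exact ⟨⟨x, hx, fun m hm => by simp [hx' m (hm.trans hκl.le), (hm.trans_lt hκl).ne],
    heq ▸ hpos⟩, l, hκl, hpos, hl'⟩

theorem eq_zero_of_notMem_faceIndices (hup : ∀ j, κ < j → ContainsUnit (dualCone B) j)
    {i j : Fin (n + 1)} (hi : i ∉ faceIndices B κ) (hj : κ < j) : B i j = 0 := by
  by_contra h
  exact hi (exists_last_pos_of_containsUnit hup hj h).1

theorem exists_last_pos_of_mem_faceIndices (hup : ∀ j, κ < j → ContainsUnit (dualCone B) j)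
    {i : Fin (n + 1)} (hi : i ∈ faceIndices B κ) :
    ∃ j, κ < j ∧ 0 < B i j ∧ ∀ l, j < l → B i l = 0 := by
  obtain ⟨x, -, hx, hpos⟩ := hi
  obtain ⟨j, -, hj⟩ := Finset.exists_ne_zero_of_sum_ne_zero hpos.ne'
  refine (exists_last_pos_of_containsUnit hup (j := j) ?_ (left_ne_zero_of_mul hj)).2
  exact not_le.1 fun h => hj (by simp [hx j h])

theorem lexPos_pivotRow_of_mem_faceIndices (hup : ∀ j, κ < j → ContainsUnit (dualCone B) j)
    {i i' : Fin (n + 1)} (hi : i ∉ faceIndices B κ) (hi' : i' ∈ faceIndices B κ) :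
    LexPos (pivotRow B κ i i') := by
  obtain ⟨j, hj, hpos, hlast⟩ := exists_last_pos_of_mem_faceIndices hup hi'
  obtain ⟨j, rfl⟩ := Fin.exists_succAbove_eq hj.ne'
  refine ⟨j, by simpa [pivotRow, eq_zero_of_notMem_faceIndices hup hi hj] using hpos,
    fun l hl => ?_⟩
  have hl' := Fin.strictMono_succAbove κ hl
  simp [pivotRow, hlast _ hl', eq_zero_of_notMem_faceIndices hup hi (hj.trans hl')]

/-- The line in direction `σ` through the `κ`-th axis meets the projected cone exactly when the
functionals outside the face are nonnegative on it. -/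
theorem exists_mem_dualCone_iff (hup : ∀ j, κ < j → ContainsUnit (dualCone B) j) (σ : ℝ) :
    (∃ x ∈ dualCone B, ∀ l ≤ κ, x l = if l = κ then σ else 0) ↔
      ∀ i, i ∉ faceIndices B κ → 0 ≤ B i κ * σ := by
  constructor
  · rintro ⟨x, hx, hx'⟩ i hi
    convert hx i using 1
    symm
    rw [dotProduct, Finset.sum_eq_single κ]
    · simp [hx' κ le_rfl]
    · intro l _ hl
      rcases lt_or_gt_of_ne hl with h | h
      · simp [hx' l h.le, hl]
      · simp [eq_zero_of_notMem_faceIndices hup hi h]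
    · simp
  · intro h
    have hy : ∀ i, ∃ x ∈ dualCone B, (∀ l ≤ κ, x l = 0) ∧
        (i ∈ faceIndices B κ → 0 < B i ⬝ᵥ x) := by
      intro i
      by_cases hi : i ∈ faceIndices B κ
      · obtain ⟨x, hx, hx', hpos⟩ := hi
        exact ⟨x, hx, hx', fun _ => hpos⟩
      · exact ⟨0, fun i => by simp, by simp, fun h => absurd h hi⟩
    choose y hy hy' hpos using hy
    have hz : ∀ i, 0 ≤ B i ⬝ᵥ ∑ i', y i' := fun i => by
      rw [dotProduct_sum]
      exact Finset.sum_nonneg fun i' _ => hy i' i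
    have hz' : ∀ i ∈ faceIndices B κ, 0 < B i ⬝ᵥ ∑ i', y i' := fun i hi => by
      rw [dotProduct_sum]
      exact Finset.sum_pos' (fun i' _ => hy i' i) ⟨i, Finset.mem_univ i, hpos i hi⟩
    have hM : ∀ i, 0 ≤ |B i κ * σ| / (B i ⬝ᵥ ∑ i', y i') := fun i =>
      div_nonneg (abs_nonneg _) (hz i)
    set M := ∑ i, |B i κ * σ| / (B i ⬝ᵥ ∑ i', y i') with hMdef
    refine ⟨Pi.single κ σ + M • ∑ i', y i', fun i => ?_, fun l hl => ?_⟩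
    · rw [dotProduct_add, dotProduct_single, dotProduct_smul, smul_eq_mul]
      by_cases hi : i ∈ faceIndices B κ
      · have h1 : |B i κ * σ| / (B i ⬝ᵥ ∑ i', y i') ≤ M :=
          Finset.single_le_sum (f := fun i => |B i κ * σ| / (B i ⬝ᵥ ∑ i', y i'))
            (fun i _ => hM i) (Finset.mem_univ i)
        rw [div_le_iff₀ (hz' i hi)] at h1
        linarith [neg_abs_le (B i κ * σ)]
      · exact add_nonneg (h i hi) (mul_nonneg (Finset.sum_nonneg fun i _ => hM i) (hz i))
    · simp [Finset.sum_apply, hy' _ l hl, Pi.single_apply]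

/-- Index `i` lies outside the face and can be eliminated against coordinate `κ` keeping all
other rows lexicographically positive. -/
def IsPivot (B : Fin (n + 1) → Fin (n + 1) → ℝ) (κ i : Fin (n + 1)) : Prop :=
  i ∉ faceIndices B κ ∧ B i κ ≠ 0 ∧ ∀ i', i' ≠ i → LexPos (pivotRow B κ i i')

theorem IsPivot.eq_of_mul_pos {i i' : Fin (n + 1)} (hi : IsPivot B κ i) (hi' : IsPivot B κ i')
    (h : 0 < B i κ * B i' κ) : i = i' := by
  by_contra hne
  exact (hi.2.2 i' (Ne.symm hne)).not_swap h (hi'.2.2 i hne)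

variable {u : Fin (n + 1) → Fin (n + 1) → ℝ}

theorem IsDualFamily.exists_isPivot (h : IsDualFamily B u)
    (hup : ∀ j, κ < j → ContainsUnit (dualCone B) j) (τ : ℝ)
    (hne : ∃ i, i ∉ faceIndices B κ ∧ 0 < B i κ * τ)
    (hrest : ∀ i i', i ∉ faceIndices B κ → 0 < B i κ * τ → i' ∉ faceIndices B κ →
      B i' κ * τ ≤ 0 → LexPos (pivotRow B κ i i')) :
    ∃ i, IsPivot B κ i ∧ 0 < B i κ * τ := by
  obtain ⟨i, ⟨hi, hpos⟩, hmin⟩ := h.exists_pivot (k := κ)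
    (S := {i | i ∉ faceIndices B κ ∧ 0 < B i κ * τ}) hne (by
      rintro i ⟨-, hi⟩ i' ⟨-, hi'⟩
      have := mul_pos hi hi'
      rw [mul_mul_mul_comm] at this
      exact pos_of_mul_pos_left this (mul_self_nonneg τ))
  refine ⟨i, ⟨hi, left_ne_zero_of_mul hpos.ne', fun i' hi' => ?_⟩, hpos⟩
  by_cases hJ : i' ∈ faceIndices B κ
  · exact lexPos_pivotRow_of_mem_faceIndices hup hi hJ
  · by_cases hp : 0 < B i' κ * τ
    · exact hmin i' ⟨hJ, hp⟩ hi'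
    · exact hrest i i' hi hpos hJ (not_lt.1 hp)

/-- A bounded interval has a second endpoint. -/
theorem IsDualFamily.exists_isPivot_neg (h : IsDualFamily B u)
    (hup : ∀ j, κ < j → ContainsUnit (dualCone B) j) {τ : ℝ} {i₁ : Fin (n + 1)}
    (h₁ : IsPivot B κ i₁) (hτ : 0 < B i₁ κ * τ)
    (hne : ∃ i, i ∉ faceIndices B κ ∧ B i κ * τ < 0) :
    ∃ i, IsPivot B κ i ∧ B i κ * τ < 0 := by
  have key := h.exists_isPivot hup (-τ) (by simpa using hne) (by
    intro i i' _ hpos _ hnonpos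
    have hneg : B i κ * τ < 0 := by linarith
    have hi₁ : i ≠ i₁ := by
      rintro rfl
      linarith
    have hnn' : 0 ≤ B i' κ * τ := by linarith
    have hτ2 : 0 < τ ^ 2 := by
      have : τ ≠ 0 := right_ne_zero_of_mul hτ.ne'
      positivity
    have hratio : 0 ≤ -(B i' κ / B i κ) := by
      have : -(B i' κ / B i κ) = (B i' κ * τ) / -(B i κ * τ) := by
        have h1 : B i κ ≠ 0 := left_ne_zero_of_mul hneg.ne
        have h2 : τ ≠ 0 := right_ne_zero_of_mul hτ.ne'
        field_simp
      rw [this]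
      exact div_nonneg hnn' (by linarith)
    have hid : pivotRow B κ i i' =
        pivotRow B κ i₁ i' + (-(B i' κ / B i κ)) • pivotRow B κ i₁ i := by
      have h1 : B i κ ≠ 0 := left_ne_zero_of_mul hneg.ne
      rw [pivotRow_trans (i := i₁) (i' := i) (i'' := i') h1]
      simp
    have hb := h₁.2.2 i hi₁
    rcases hratio.lt_or_eq with hr | hr
    · by_cases hi' : i' = i₁
      · subst hi'
        rw [hid, pivotRow_self h₁.2.1, zero_add]
        exact hb.smul hr
      · rw [hid]
        exact (h₁.2.2 i' hi').add (hb.smul hr)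
    · rw [hid, ← hr, zero_smul, add_zero]
      refine h₁.2.2 i' ?_
      rintro rfl
      have h1 : B i κ ≠ 0 := left_ne_zero_of_mul hneg.ne
      have h2 := h₁.2.1
      exact (div_ne_zero h2 h1) (by linarith))
  simpa using key

theorem IsDualFamily.exists_isPivot_of_positive (h : IsDualFamily B u)
    (hpos : ∀ j, ContainsUnit (dualCone B) j)
    (hnn : ∀ i, i ∉ faceIndices B κ → 0 ≤ B i κ)
    (hne : ∃ i, i ∉ faceIndices B κ ∧ 0 < B i κ) :
    ∃ i, IsPivot B κ i ∧ 0 < B i κ := by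
  have key := h.exists_isPivot (fun j _ => hpos j) 1 (by simpa using hne) (by
    intro i i' _ _ hi' hle
    have h0 : B i' κ = 0 := le_antisymm (by simpa using hle) (hnn i' hi')
    have hB : B i' ≠ 0 := fun hB => by simpa [hB] using h.self i'
    obtain ⟨j, hj, hlast⟩ := exists_last_ne_zero hB
    obtain ⟨x, hx, hx'⟩ := hpos j
    have heq : B i' ⬝ᵥ x = B i' j := sum_mul_eq_of_last hlast hx'
    have hjpos : 0 < B i' j := lt_of_le_of_ne (heq ▸ hx i') hj.symm
    obtain ⟨j, rfl⟩ := Fin.exists_succAbove_eq (show j ≠ κ from fun e => hj (e ▸ h0))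
    exact ⟨j, by simpa [pivotRow, h0] using hjpos, fun l hl => by
      simp [pivotRow, h0, hlast _ (Fin.strictMono_succAbove κ hl)]⟩)
  simpa using key

/-- The permuted family is positively ordered after deleting position and coordinate `κ`, and its
entry at position `κ` lies outside the face. -/
def IsWeaklyFlagPositive (u B : Fin (n + 1) → Fin (n + 1) → ℝ) (κ : Fin (n + 1))
    (w : Equiv.Perm (Fin (n + 1))) : Prop :=
  FlagPositive (fun j l => u (w (κ.succAbove j)) (κ.succAbove l)) ∧ w κ ∉ faceIndices B κ

theorem IsWeaklyFlagPositive.isPivot {w : Equiv.Perm (Fin (n + 1))}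
    (hw : IsWeaklyFlagPositive u B κ w) (h : IsDualFamily B u) : IsPivot B κ (w κ) :=
  ⟨hw.2, h.pivot_of_flagPositive (e := fun j => w (κ.succAbove j))
    (fun j => w.injective.ne (Fin.succAbove_ne κ j)) hw.1⟩

theorem IsPivot.exists_isWeaklyFlagPositive {i : Fin (n + 1)} (hi : IsPivot B κ i)
    (h : IsDualFamily B u) : ∃ w, IsWeaklyFlagPositive u B κ w ∧ w κ = i := by
  obtain ⟨e, he⟩ := (h.pivot hi.2.1).exists_flagPositive (by simp) (fun x => hi.2.2 x x.2)
  obtain ⟨w, hw, hw'⟩ := exists_equiv_insert κ e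
  exact ⟨w, ⟨by simpa [hw'] using! he, hw ▸ hi.1⟩, hw⟩

theorem IsWeaklyFlagPositive.eq_of_apply_eq {w w' : Equiv.Perm (Fin (n + 1))}
    (hw : IsWeaklyFlagPositive u B κ w) (hw' : IsWeaklyFlagPositive u B κ w')
    (h : IsDualFamily B u) (heq : w κ = w' κ) : w = w' := by
  have hne : ∀ j, w (κ.succAbove j) ≠ w κ := fun j => w.injective.ne (Fin.succAbove_ne κ j)
  have hne' : ∀ j, w' (κ.succAbove j) ≠ w κ := fun j =>
    heq ▸ w'.injective.ne (Fin.succAbove_ne κ j)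
  have := (h.pivot (hw.isPivot h).2.1).flagPositive_unique
    (e := fun j => ⟨w (κ.succAbove j), hne j⟩) (e' := fun j => ⟨w' (κ.succAbove j), hne' j⟩)
    (fun a b hab => Fin.succAbove_right_injective (w.injective (Subtype.ext_iff.1 hab)))
    (fun a b hab => Fin.succAbove_right_injective (w'.injective (Subtype.ext_iff.1 hab)))
    hw.1 hw'.1
  ext j : 1
  by_cases hj : j = κ
  · rw [hj, heq]
  · obtain ⟨j, rfl⟩ := Fin.exists_succAbove_eq hj
    exact Subtype.ext_iff.1 (congrFun this j)

theorem IsWeaklyFlagPositive.containsUnit {w : Equiv.Perm (Fin (n + 1))}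
    (hw : IsWeaklyFlagPositive u B κ w) (h : IsDualFamily B u) {j : Fin (n + 1)} (hj : j < κ) :
    ContainsUnit (dualCone B) j := by
  obtain ⟨j, rfl⟩ := Fin.exists_succAbove_eq hj.ne
  obtain ⟨a, ha, -, hx⟩ := hw.1 j
  refine ⟨∑ i, a i • u (w (κ.succAbove i)), fun i => ?_, fun l hl => ?_⟩
  · rw [dotProduct_sum]
    refine Finset.sum_nonneg fun i' _ => ?_
    rw [dotProduct_smul]
    refine mul_nonneg (ha i') ?_
    by_cases hi : i = w (κ.succAbove i')
    · rw [← hi]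
      exact (h.self i).ge.trans' zero_le_one
    · exact (h.ne _ _ hi).ge
  · obtain ⟨l, rfl⟩ := Fin.exists_succAbove_eq (hl.trans_lt hj).ne
    simpa [Finset.sum_apply] using hx l ((Fin.strictMono_succAbove κ).le_iff_le.1 hl)

theorem IsWeaklyFlagPositive.det_mul_pos {w : Equiv.Perm (Fin (n + 1))}
    (hw : IsWeaklyFlagPositive u B κ w) (h : IsDualFamily B u) :
    0 < (Matrix.of fun i j => u (w j) i).det * B (w κ) κ := by
  set A : Matrix (Fin (n + 1)) (Fin (n + 1)) ℝ := Matrix.of fun i j => u (w j) i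
  set N : Matrix (Fin (n + 1)) (Fin (n + 1)) ℝ := Matrix.of fun i j => B (w i) j
  have hNA : N * A = 1 := by
    ext i i'
    by_cases hi : i = i'
    · subst hi
      simpa [Matrix.mul_apply, N, A] using h.self (w i)
    · simpa [Matrix.mul_apply, Matrix.one_apply, hi, N, A] using
        h.ne (w i) (w i') (w.injective.ne hi)
  have hadj : A.adjugate = A.det • N := by
    have := congrArg (N * ·) (Matrix.mul_adjugate A)
    simpa [← Matrix.mul_assoc, hNA] using this
  have h1 := congrFun (congrFun hadj κ) κ
  rw [Matrix.adjugate_fin_succ_eq_det_submatrix] at h1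
  have h2 := hw.1.det_pos
  have h3 : A.submatrix κ.succAbove κ.succAbove =
      (Matrix.of fun j l => u (w (κ.succAbove j)) (κ.succAbove l)).transpose := rfl
  rw [h3, Matrix.det_transpose, Even.neg_one_pow ⟨_, rfl⟩, one_mul] at h1
  simpa [h1, N] using h2

end FaceIndices

/-- Sums of numbers of constant absolute value with at most one summand of each sign. -/
theorem sum_filter_of_sign_unique {α : Type*} [Fintype α] (P : α → Prop) (c d : α → ℝ) (D : ℝ)
    (hD : ∀ a, |d a| = D) (hcd : ∀ a, P a → 0 < d a * c a)
    (huniq : ∀ a b, P a → P b → 0 < c a * c b → a = b) :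
    (0 < ∑ a ∈ Finset.univ.filter P, d a ↔ (∃ a, P a ∧ 0 < c a) ∧ ¬ ∃ a, P a ∧ c a < 0) ∧
    (∑ a ∈ Finset.univ.filter P, d a < 0 ↔ (∃ a, P a ∧ c a < 0) ∧ ¬ ∃ a, P a ∧ 0 < c a) ∧
    (∑ a ∈ Finset.univ.filter P, d a ≠ 0 ↔ ∃! a, P a) := by
  have hpos : ∀ a, P a → 0 < c a → 0 < D ∧ d a = D := fun a ha hc => by
    have := pos_of_mul_pos_left (hcd a ha) hc.le
    rw [← hD a, abs_of_pos this]
    exact ⟨this, rfl⟩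
  have hneg : ∀ a, P a → c a < 0 → 0 < D ∧ d a = -D := fun a ha hc => by
    have := neg_of_mul_pos_left (hcd a ha) hc.le
    rw [← hD a, abs_of_neg this]
    exact ⟨by linarith, by ring⟩
  have hne : ∀ a, P a → 0 < c a ∨ c a < 0 := fun a ha =>
    (lt_or_gt_of_ne (right_ne_zero_of_mul (hcd a ha).ne')).symm
  by_cases h1 : ∃ a, P a ∧ 0 < c a <;> by_cases h2 : ∃ a, P a ∧ c a < 0
  · obtain ⟨a, ha, hca⟩ := id h1
    obtain ⟨b, hb, hcb⟩ := id h2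
    have hab : a ≠ b := by
      rintro rfl
      linarith
    have hf : Finset.univ.filter P = {a, b} := by
      ext x
      simp only [Finset.mem_filter, Finset.mem_univ, true_and, Finset.mem_insert,
        Finset.mem_singleton]
      refine ⟨fun hx => ?_, ?_⟩
      · rcases hne x hx with h | h
        · exact Or.inl (huniq x a hx ha (mul_pos h hca))
        · exact Or.inr (huniq x b hx hb (mul_pos_of_neg_of_neg h hcb))
      · rintro (rfl | rfl) <;> assumption
    have hsum : ∑ x ∈ Finset.univ.filter P, d x = 0 := by
      rw [hf, Finset.sum_pair hab, (hpos a ha hca).2, (hneg b hb hcb).2, add_neg_cancel]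
    simp only [hsum, h1, h2, lt_irrefl, ne_eq, not_true_eq_false, and_false, false_iff, true_and]
    rintro ⟨x, -, hx⟩
    exact hab ((hx a ha).trans (hx b hb).symm)
  · obtain ⟨a, ha, hca⟩ := id h1
    have hu : ∀ x, P x → x = a := fun x hx =>
      huniq x a hx ha (mul_pos ((hne x hx).resolve_right fun h => h2 ⟨x, hx, h⟩) hca)
    have hf : Finset.univ.filter P = {a} := by
      ext x
      simpa using ⟨hu x, fun h => h ▸ ha⟩
    have hsum : ∑ x ∈ Finset.univ.filter P, d x = D := by
      rw [hf, Finset.sum_singleton, (hpos a ha hca).2]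
    have hD0 := (hpos a ha hca).1
    simp only [hsum, h1, h2, hD0, hD0.not_gt, hD0.ne', ne_eq, not_false_eq_true, not_true_eq_false,
      and_true, and_false, true_and, true_iff]
    exact ⟨a, ha, hu⟩
  · obtain ⟨a, ha, hca⟩ := id h2
    have hu : ∀ x, P x → x = a := fun x hx =>
      huniq x a hx ha (mul_pos_of_neg_of_neg ((hne x hx).resolve_left fun h => h1 ⟨x, hx, h⟩) hca)
    have hf : Finset.univ.filter P = {a} := by
      ext x
      simpa using ⟨hu x, fun h => h ▸ ha⟩
    have hsum : ∑ x ∈ Finset.univ.filter P, d x = -D := by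
      rw [hf, Finset.sum_singleton, (hneg a ha hca).2]
    have hD0 := (hneg a ha hca).1
    have hD1 : -D < 0 := by linarith
    simp only [hsum, h1, h2, hD1, hD1.not_gt, hD1.ne, ne_eq, not_false_eq_true, not_true_eq_false,
      and_true, and_false, true_iff, true_and]
    exact ⟨a, ha, hu⟩
  · have hP : ∀ x, ¬ P x := fun x hx =>
      (hne x hx).elim (fun h => h1 ⟨x, hx, h⟩) fun h => h2 ⟨x, hx, h⟩
    simp [hP]

theorem skipIdx_eq_succAbove {n : ℕ} (κ : Fin (n + 1)) (j : Fin n) :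
    skipIdx (n + 1) (κ + 1) j = κ.succAbove j := by
  unfold skipIdx
  split_ifs with h
  · rw [Fin.succAbove_of_castSucc_lt _ _ (by rw [Fin.lt_def]; exact h)]
    rfl
  · rw [Fin.succAbove_of_le_castSucc _ _ (by rw [Fin.le_def]; exact not_lt.1 h)]
    rfl

theorem exists_isDualFamily {n : ℕ} {u : Fin n → Fin n → ℝ} (hu : LinearIndependent ℝ u) :
    ∃ B : Fin n → Fin n → ℝ, IsDualFamily B u ∧ ∀ x, ∑ i, (B i ⬝ᵥ x) • u i = x := by
  have hunit : IsUnit (Matrix.of u) := Matrix.linearIndependent_rows_iff_isUnit.1 hu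
  have hdet : IsUnit (Matrix.of u).det := (Matrix.isUnit_iff_isUnit_det _).1 hunit
  have h1 := Matrix.mul_nonsing_inv _ hdet
  have h2 := Matrix.nonsing_inv_mul _ hdet
  refine ⟨fun i j => (Matrix.of u)⁻¹ j i, ⟨fun i => ?_, fun i i' hi => ?_⟩, fun x => ?_⟩
  · simpa [Matrix.mul_apply, mul_comm] using congrFun (congrFun h1 i) i
  · simpa [Matrix.mul_apply, mul_comm, Matrix.one_apply, hi.symm] using
      congrFun (congrFun h1 i') i
  · have h3 : Matrix.vecMul x ((Matrix.of u)⁻¹ * Matrix.of u) = x := by rw [h2, Matrix.vecMul_one]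
    rw [← Matrix.vecMul_vecMul] at h3
    conv_rhs => rw [← h3]
    funext j
    simp [Matrix.vecMul, dotProduct, Finset.sum_apply, mul_comm]

/-- Lemma on sums of determinants over `k`-weakly positively ordered
permutations of the generators of a full-dimensional simplicial cone. -/
theorem sum_det_kWPO {s : ℕ}
    (u : Fin s → (Fin s → ℝ)) (hu : LinearIndependent ℝ u)
    (k : ℕ) (hk1 : 1 < k) (hks : k ≤ s)
    (C : Set (Fin s → ℝ))
    (hC : C = {x | ∃ lam : Fin s → ℝ, (∀ i, 0 ≤ lam i) ∧ x = ∑ i, lam i • u i})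
    (hupper : ∀ j, k < j → ∀ hj : j ≤ s, lastUnit j ∈ prProj j hj '' C)
    (Jk : Set (Fin s))
    (hJk : Jk = {i | ∃ mu : Fin s → ℝ, (∀ l, 0 ≤ mu l) ∧
      prProj k hks (∑ l, mu l • u l) = 0 ∧ 0 < mu i})
    (Cface : Set (Fin s → ℝ))
    (hCface : Cface = {x | ∃ lam : Fin s → ℝ, (∀ i, 0 ≤ lam i) ∧
      (∀ i, i ∉ Jk → lam i = 0) ∧ x = ∑ i, lam i • u i})
    (kWPO : Equiv.Perm (Fin s) → Prop)
    (hkWPO : ∀ w, kWPO w ↔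
      (PositivelyOrdered (fun j : Fin (s - 1) => fun i : Fin (s - 1) =>
          u (w (skipIdx s k j)) (skipIdx s k i)) ∧
        u (w ⟨k - 1, by omega⟩) ∉ Cface))
    (lam : ℝ)
    (hlam : lam = ∑ w ∈ Finset.univ.filter (fun w : Equiv.Perm (Fin s) => kWPO w),
      Matrix.det (Matrix.of fun i j : Fin s => u (w j) i)) :
    (lam ≠ 0 ↔ ∃! w : Equiv.Perm (Fin s), kWPO w) ∧
    ((0 < lam) ↔ (lam ≠ 0 ∧ lastUnit k ∈ prProj k hks '' C)) ∧
    ((0 < lam) ↔ (lam ≠ 0 ∧ (-lastUnit k) ∉ prProj k hks '' C)) ∧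
    ((0 < lam) ↔ (IsPositiveCone C ∧ (-lastUnit k) ∉ prProj k hks '' C)) := by
  obtain ⟨n, rfl⟩ : ∃ n, s = n + 1 := ⟨s - 1, by omega⟩
  obtain ⟨κ, rfl⟩ : ∃ κ : Fin (n + 1), k = κ + 1 := ⟨⟨k - 1, by omega⟩, by simp; omega⟩
  obtain ⟨B, h, hexp⟩ := exists_isDualFamily hu
  have hpair : ∀ i (a : Fin (n + 1) → ℝ), B i ⬝ᵥ ∑ l, a l • u l = a i := fun i a => by
    rw [dotProduct_sum, Finset.sum_eq_single i]
    · rw [dotProduct_smul, smul_eq_mul, show B i ⬝ᵥ u i = 1 from h.self i, mul_one]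
    · intro l _ hl
      rw [dotProduct_smul, show B i ⬝ᵥ u l = 0 from h.ne i l hl.symm, smul_zero]
    · simp
  have hCB : C = dualCone B := by
    rw [hC]
    ext x
    refine ⟨?_, fun hx => ⟨fun i => B i ⬝ᵥ x, hx, (hexp x).symm⟩⟩
    rintro ⟨a, ha, rfl⟩ i
    rw [hpair]
    exact ha i
  have hzero : ∀ x : Fin (n + 1) → ℝ, prProj (κ + 1) hks x = 0 ↔ ∀ l ≤ κ, x l = 0 :=
    fun x => ⟨fun hx l hl => congrFun hx ⟨l, Nat.lt_succ_of_le hl⟩,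
      fun hx => funext fun l => hx _ (Nat.lt_succ_iff.1 l.isLt)⟩
  have hJ : Jk = faceIndices B κ := by
    rw [hJk]
    ext i
    constructor
    · rintro ⟨a, ha, ha', hai⟩
      exact ⟨∑ l, a l • u l, fun i => by rw [hpair]; exact ha i, (hzero _).1 ha',
        by rwa [hpair]⟩
    · rintro ⟨x, hx, hx', hxi⟩
      exact ⟨fun i => B i ⬝ᵥ x, hx, by rw [hexp]; exact (hzero _).2 hx', hxi⟩
  have hface : ∀ i, u i ∈ Cface ↔ i ∈ faceIndices B κ := by
    intro i
    have hi : B i ⬝ᵥ u i = 1 := h.self i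
    rw [hCface, ← hJ]
    constructor
    · rintro ⟨a, -, ha, hui⟩
      by_contra hiJ
      have := hpair i a
      rw [← hui, hi, ha i hiJ] at this
      exact one_ne_zero this
    · intro hiJ
      refine ⟨Pi.single i 1, fun l => ?_, fun l hl => ?_, ?_⟩
      · rw [Pi.single_apply]
        split_ifs <;> norm_num
      · exact Pi.single_eq_of_ne (fun e : l = i => hl (e ▸ hiJ)) 1
      · simp [Pi.single_apply, ite_smul]
  have hW : ∀ w, kWPO w ↔ IsWeaklyFlagPositive u B κ w := by
    intro w
    rw [hkWPO, positivelyOrdered_iff, hface]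
    simp only [skipIdx_eq_succAbove]
    rfl
  have hup : ∀ j, κ < j → ContainsUnit (dualCone B) j := fun j hj => by
    rw [← hCB]
    exact (lastUnit_mem_iff C j).1 (hupper _ (by have : (κ : ℕ) < j := hj; omega) _)
  have hPos : lastUnit (κ + 1) ∈ prProj (κ + 1) hks '' C ↔
      ∀ i, i ∉ faceIndices B κ → 0 ≤ B i κ := by
    have := smul_lastUnit_mem_iff C κ 1
    rw [one_smul, hCB, exists_mem_dualCone_iff hup] at this
    simpa [hCB] using this
  have hNeg : -lastUnit (κ + 1) ∈ prProj (κ + 1) hks '' C ↔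
      ∀ i, i ∉ faceIndices B κ → B i κ ≤ 0 := by
    have := smul_lastUnit_mem_iff C κ (-1)
    rw [neg_one_smul, hCB, exists_mem_dualCone_iff hup] at this
    simpa [hCB] using this
  obtain ⟨hlpos, hlneg, hlne⟩ := sum_filter_of_sign_unique kWPO (fun w => B (w κ) κ)
    (fun w => (Matrix.of fun i j => u (w j) i).det) |(Matrix.of u).det|
    (fun w => by
      have hperm := Matrix.det_permute w (Matrix.of u)
      rw [← Matrix.det_transpose] at hperm
      have hA : (Matrix.of fun i j => u (w j) i) = ((Matrix.of u).submatrix w id).transpose := rfl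
      rw [hA, hperm, abs_mul, ← Int.cast_abs, Int.abs_eq_natAbs, Int.units_natAbs]
      simp)
    (fun w hw => ((hW w).1 hw).det_mul_pos h)
    (fun w w' hw hw' hww' => ((hW w).1 hw).eq_of_apply_eq ((hW w').1 hw') h
      ((((hW w).1 hw).isPivot h).eq_of_mul_pos (((hW w').1 hw').isPivot h) hww'))
  rw [← hlam] at hlpos hlneg hlne
  have hex : ∀ Q : ℝ → Prop, (∃ w, kWPO w ∧ Q (B (w κ) κ)) ↔ ∃ i, IsPivot B κ i ∧ Q (B i κ) := by
    intro Q
    constructor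
    · rintro ⟨w, hw, hQ⟩
      exact ⟨w κ, ((hW w).1 hw).isPivot h, hQ⟩
    · rintro ⟨i, hi, hQ⟩
      obtain ⟨w, hw, rfl⟩ := hi.exists_isWeaklyFlagPositive h
      exact ⟨w, (hW w).2 hw, hQ⟩
  rw [hex (0 < ·), hex (· < 0)] at hlpos hlneg
  have hcone : IsPositiveCone C ↔ ∀ j, ContainsUnit (dualCone B) j := by
    rw [isPositiveCone_iff, hCB]
    rfl
  have hunit : ContainsUnit (dualCone B) κ ↔ ∀ i, i ∉ faceIndices B κ → 0 ≤ B i κ := by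
    simpa [ContainsUnit] using exists_mem_dualCone_iff hup 1
  -- With no pivot of the opposite sign, the fibre over the `κ`-th axis direction is a half-line.
  have hupward : 0 < lam → ∀ i, i ∉ faceIndices B κ → 0 ≤ B i κ := by
    intro hl i hi
    obtain ⟨⟨i₁, h₁, hpos⟩, hnone⟩ := hlpos.1 hl
    by_contra! hcon
    exact hnone (by
      simpa using h.exists_isPivot_neg hup (τ := 1) h₁ (by simpa using hpos)
        ⟨i, hi, by simpa using hcon⟩)
  have hdownward : lam < 0 → ∀ i, i ∉ faceIndices B κ → B i κ ≤ 0 := by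
    intro hl i hi
    obtain ⟨⟨i₁, h₁, hneg⟩, hnone⟩ := hlneg.1 hl
    by_contra! hcon
    exact hnone (by
      simpa using h.exists_isPivot_neg hup (τ := -1) h₁ (by simpa using hneg)
        ⟨i, hi, by simpa using hcon⟩)
  have hnotNeg : 0 < lam → -lastUnit (κ + 1) ∉ prProj (κ + 1) hks '' C := by
    intro hl hmem
    obtain ⟨⟨i₁, h₁, hpos⟩, -⟩ := hlpos.1 hl
    exact absurd (hNeg.1 hmem i₁ h₁.1) (not_le.2 hpos)
  refine ⟨hlne, ⟨fun hl => ⟨hl.ne', hPos.2 (hupward hl)⟩, ?_⟩,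
    ⟨fun hl => ⟨hl.ne', hnotNeg hl⟩, ?_⟩, ⟨fun hl => ⟨?_, hnotNeg hl⟩, ?_⟩⟩
  · rintro ⟨hne, hmem⟩
    refine hne.lt_or_gt.resolve_left fun hl => ?_
    obtain ⟨⟨i₁, h₁, hneg⟩, -⟩ := hlneg.1 hl
    exact absurd (hPos.1 hmem i₁ h₁.1) (not_le.2 hneg)
  · rintro ⟨hne, hmem⟩
    exact hne.lt_or_gt.resolve_left fun hl => hmem (hNeg.2 (hdownward hl))
  · rw [hcone]
    intro j
    rcases lt_trichotomy j κ with hj | rfl | hj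
    · obtain ⟨⟨i₁, h₁, -⟩, -⟩ := hlpos.1 hl
      obtain ⟨w, hw, -⟩ := h₁.exists_isWeaklyFlagPositive h
      exact hw.containsUnit h hj
    · exact hunit.2 (hupward hl)
    · exact hup j hj
  · rintro ⟨hpos, hmem⟩
    rw [hcone] at hpos
    have hnn := hunit.1 (hpos κ)
    rw [hNeg] at hmem
    push Not at hmem
    refine hlpos.2 ⟨h.exists_isPivot_of_positive hpos hnn hmem, ?_⟩
    rintro ⟨i, hi, hlt⟩
    exact absurd (hnn i hi.1) (not_le.2 hlt)

end
end
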